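/- arXiv:1711.02337 — 2 statements merged into one kernel-verified Lean document; each statement's English description precedes it below -/
import Mathlib

section
/- For every nonnegative integer n, the identity Σ_{π∈Alt_{2n+1}} q^{maj(η_{2n+1}π^{-1})} = Σ_{π∈Alt_{2n+1}} q^{inv(π)+nasc(π_e)} holds as an identity of polynomials in q. -/
open Finset

attribute [local instance 10] Classical.propDecidable

noncomputable section

namespace Paper

/-! ### Words and permutation statistics (all words are 1-based). -/

/-- The word (one-line notation, 1-based) of a permutation of `{1, …, N}`:
`word π i = π(i)` for `1 ≤ i ≤ N`, and `0` otherwise. -/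
def word {N : ℕ} (π : Equiv.Perm (Fin N)) (i : ℕ) : ℕ :=
  if h : 1 ≤ i ∧ i ≤ N then (π ⟨i - 1, by omega⟩ : ℕ) + 1 else 0

/-- The major index of a word of length `N`: the sum of the descents. -/
def majW (N : ℕ) (w : ℕ → ℕ) : ℕ :=
  ∑ i ∈ Finset.Icc 1 (N - 1), if w (i + 1) < w i then i else 0

/-- The number of inversions of a word of length `N`. -/
def invW (N : ℕ) (w : ℕ → ℕ) : ℕ :=
  (((Finset.Icc 1 N) ×ˢ (Finset.Icc 1 N)).filter
    fun p => p.1 < p.2 ∧ w p.2 < w p.1).card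

/-- The number of descents of a word of length `m`. -/
def desW (m : ℕ) (w : ℕ → ℕ) : ℕ :=
  ((Finset.Icc 1 (m - 1)).filter fun i => w (i + 1) < w i).card

/-- The number of ascents of a word of length `m`. -/
def ascW (m : ℕ) (w : ℕ → ℕ) : ℕ :=
  ((Finset.Icc 1 (m - 1)).filter fun i => w i < w (i + 1)).card

/-- The number of non-descents of a word of length `m`. -/
def ndesW (m : ℕ) (w : ℕ → ℕ) : ℕ :=
  ((Finset.Icc 1 m).filter fun i => i = m ∨ w i < w (i + 1)).card

/-- The number of non-ascents of a word of length `m`. -/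
def nascW (m : ℕ) (w : ℕ → ℕ) : ℕ :=
  ((Finset.Icc 1 m).filter fun i => i = m ∨ ¬ w i < w (i + 1)).card

/-- `π_e = π₂π₄⋯`, the subword of even-position entries, as a 1-based word. -/
def evenWord {N : ℕ} (π : Equiv.Perm (Fin N)) (j : ℕ) : ℕ := word π (2 * j)

/-- `π_o = π₁π₃⋯`, the subword of odd-position entries, as a 1-based word. -/
def oddWord {N : ℕ} (π : Equiv.Perm (Fin N)) (j : ℕ) : ℕ := word π (2 * j - 1)

/-- A word of length `N` is alternating: `w₁ < w₂ > w₃ < w₄ > ⋯`. -/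
def IsAltW (N : ℕ) (w : ℕ → ℕ) : Prop :=
  ∀ i ∈ Finset.Icc 1 (N - 1), (i % 2 = 1 → w i < w (i + 1)) ∧ (i % 2 = 0 → w (i + 1) < w i)

/-- A word of length `N` is reverse alternating: `w₁ > w₂ < w₃ > w₄ < ⋯`. -/
def IsRaltW (N : ℕ) (w : ℕ → ℕ) : Prop :=
  ∀ i ∈ Finset.Icc 1 (N - 1), (i % 2 = 1 → w (i + 1) < w i) ∧ (i % 2 = 0 → w i < w (i + 1))

/-- `Alt_N`, the set of alternating permutations of `{1, …, N}`. -/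
def altPerms (N : ℕ) : Finset (Equiv.Perm (Fin N)) :=
  Finset.univ.filter fun π => IsAltW N (word π)

/-- `Ralt_N`, the set of reverse alternating permutations of `{1, …, N}`. -/
def raltPerms (N : ℕ) : Finset (Equiv.Perm (Fin N)) :=
  Finset.univ.filter fun π => IsRaltW N (word π)

/-- `κ_N = (1)(2,3)(4,5)⋯`, acting on the 1-based values `{1, …, N}`. -/
def kappaNat (N j : ℕ) : ℕ :=
  if j % 2 = 0 ∧ 2 ≤ j ∧ j + 1 ≤ N then j + 1
  else if j % 2 = 1 ∧ 3 ≤ j ∧ j ≤ N then j - 1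
  else j

/-- `η_N = (1,2)(3,4)⋯`, acting on the 1-based values `{1, …, N}`. -/
def etaNat (N j : ℕ) : ℕ :=
  if j % 2 = 1 ∧ j + 1 ≤ N then j + 1
  else if j % 2 = 0 ∧ 2 ≤ j ∧ j ≤ N then j - 1
  else j

/-- `maj(π⁻¹)`. -/
def majInv (N : ℕ) (π : Equiv.Perm (Fin N)) : ℕ := majW N (word π.symm)

/-- `maj(κ_N π⁻¹)`. -/
def majKappaInv (N : ℕ) (π : Equiv.Perm (Fin N)) : ℕ :=
  majW N fun i => kappaNat N (word π.symm i)

/-- `maj(η_N π⁻¹)`. -/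
def majEtaInv (N : ℕ) (π : Equiv.Perm (Fin N)) : ℕ :=
  majW N fun i => etaNat N (word π.symm i)

/-- The reversal permutation `i ↦ N + 1 - i` of `Fin N`. -/
def revPerm (N : ℕ) : Equiv.Perm (Fin N) :=
  ⟨Fin.rev, Fin.rev, fun i => Fin.rev_rev i, fun i => Fin.rev_rev i⟩

/-- `φ(π)ᵢ = (N+1) - π_{N+1-i}`. -/
def phiMap {N : ℕ} (π : Equiv.Perm (Fin N)) : Equiv.Perm (Fin N) :=
  ((revPerm N).trans π).trans (revPerm N)

/-! ### Lattice paths.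

A path with `L` unit steps is encoded by `s : Fin L → Bool` (`true` = up-step `(1,1)`,
`false` = down-step `(1,-1)`). -/

/-- The vertical displacement of the `j`-th step. -/
def stepVal {L : ℕ} (s : Fin L → Bool) (j : ℕ) : ℤ :=
  if h : j < L then (if s ⟨j, h⟩ then 1 else -1) else 0

/-- The height of the path after `i` steps. -/
def pht {L : ℕ} (s : Fin L → Bool) (i : ℕ) : ℤ := ∑ j ∈ Finset.range i, stepVal s j

/-- A Dyck path: stays (weakly) above the `x`-axis and ends at height `0`. -/
def IsDyck {L : ℕ} (s : Fin L → Bool) : Prop :=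
  (∀ i ∈ Finset.range (L + 1), 0 ≤ pht s i) ∧ pht s L = 0

/-- The Dyck paths with `L` steps. -/
def dyckPaths (L : ℕ) : Finset (Fin L → Bool) := Finset.univ.filter fun s => IsDyck s

/-- The (indices of the) valleys of a path: a down-step followed by an up-step. -/
def valleys {L : ℕ} (s : Fin L → Bool) : Finset ℕ :=
  (Finset.Icc 1 (L - 1)).filter fun i => stepVal s (i - 1) = -1 ∧ stepVal s i = 1

/-- The (indices of the) peaks of a path: an up-step followed by a down-step. -/
def peaks {L : ℕ} (s : Fin L → Bool) : Finset ℕ :=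
  (Finset.Icc 1 (L - 1)).filter fun i => stepVal s (i - 1) = 1 ∧ stepVal s i = -1

/-- The (indices of the) high peaks of a path: peaks of height at least `2`. -/
def highPeaks {L : ℕ} (s : Fin L → Bool) : Finset ℕ :=
  (peaks s).filter fun i => 2 ≤ pht s i

/-- The height over abscissa `x` of a path starting at `(-m, 0)`. -/
def aht (m : ℕ) {L : ℕ} (s : Fin L → Bool) (x : ℤ) : ℤ := pht s (x + m).toNat

/-- `D₁ < D₂`, for `D₁` starting at `(-m₁,0)` and `D₂` at `(-m₂,0)`, `m₁ ≤ m₂`: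
strictly below on the common range of abscissas. -/
def PathLT (m₁ m₂ : ℕ) {L₁ L₂ : ℕ} (s₁ : Fin L₁ → Bool) (s₂ : Fin L₂ → Bool) : Prop :=
  ∀ x ∈ Finset.Icc (-(m₁ : ℤ)) (m₁ : ℤ), aht m₁ s₁ x < aht m₂ s₂ x

/-- `D₁ ≤ D₂`: weakly below, sharing no step. -/
def PathLE (m₁ m₂ : ℕ) {L₁ L₂ : ℕ} (s₁ : Fin L₁ → Bool) (s₂ : Fin L₂ → Bool) : Prop :=
  (∀ x ∈ Finset.Icc (-(m₁ : ℤ)) (m₁ : ℤ), aht m₁ s₁ x ≤ aht m₂ s₂ x) ∧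
    ∀ x ∈ Finset.Icc (-(m₁ : ℤ)) ((m₁ : ℤ) - 1),
      ¬(aht m₁ s₁ x = aht m₂ s₂ x ∧ aht m₁ s₁ (x + 1) = aht m₂ s₂ (x + 1))

/-- The abscissas of the common lattice points of two paths. -/
def interPts (m₁ m₂ : ℕ) {L₁ L₂ : ℕ} (s₁ : Fin L₁ → Bool) (s₂ : Fin L₂ → Bool) : Finset ℤ :=
  (Finset.Icc (-(m₁ : ℤ)) (m₁ : ℤ)).filter fun x => aht m₁ s₁ x = aht m₂ s₂ x

/-- `Dyck^k_{2n}`: tuples `(D₁, …, D_k)` with `D_i ∈ Dyck((-n-2i+2,0) → (n+2i-2,0))`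
(0-based: `D_i` has half-length `n + 2i`). -/
abbrev DyckTuple (n k : ℕ) := ∀ i : Fin k, Fin (2 * (n + 2 * (i : ℕ))) → Bool

/-- The tuples `(D₁ ≤ D₂ ≤ ⋯ ≤ D_k) ∈ Dyck^k_{2n}`. -/
def weakTuples (n k : ℕ) : Finset (DyckTuple n k) :=
  Finset.univ.filter fun D =>
    (∀ i : Fin k, IsDyck (D i)) ∧
      ∀ (i : ℕ) (h : i + 1 < k),
        PathLE (n + 2 * i) (n + 2 * (i + 1)) (D ⟨i, by omega⟩) (D ⟨i + 1, h⟩)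

/-- The tuples `(D₁ < D₂ < ⋯ < D_k) ∈ Dyck^k_{2n}`. -/
def strictTuples (n k : ℕ) : Finset (DyckTuple n k) :=
  Finset.univ.filter fun D =>
    (∀ i : Fin k, IsDyck (D i)) ∧
      ∀ (i : ℕ) (h : i + 1 < k),
        PathLT (n + 2 * i) (n + 2 * (i + 1)) (D ⟨i, by omega⟩) (D ⟨i + 1, h⟩)

/-- The lattice points of a path starting at `(-m, 0)`, as a finite subset of `ℤ × ℤ`. -/
def pathPoints (m : ℕ) {L : ℕ} (s : Fin L → Bool) : Finset (ℤ × ℤ) :=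
  (Finset.range (L + 1)).image fun t : ℕ => (-(m : ℤ) + (t : ℤ), pht s t)

/-- The non-valley lattice points of a path starting at `(-m, 0)`. -/
def nonValleyPoints (m : ℕ) {L : ℕ} (s : Fin L → Bool) : Finset (ℤ × ℤ) :=
  ((Finset.range (L + 1)).filter fun t => t ∉ valleys s).image
    fun t : ℕ => (-(m : ℤ) + (t : ℤ), pht s t)

section Weights

variable {F : Type*} [Field F]

/-- The `i`-th lattice point (in `ℤ × ℕ`) of a path starting at `(a, 0)`. -/
def ptOf (a : ℤ) {L : ℕ} (s : Fin L → Bool) (i : ℕ) : ℤ × ℕ := (a + i, (pht s i).toNat)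

/-- `wt_V(D) = ∏_{p ∈ D} wt(p) · ∏_{p ∈ V(D)} w̃t(p)` for a path starting at `(a, 0)`. -/
def wtVal (wt wte : ℤ × ℕ → F) (a : ℤ) {L : ℕ} (s : Fin L → Bool) : F :=
  (∏ i ∈ Finset.range (L + 1), wt (ptOf a s i)) * ∏ i ∈ valleys s, wte (ptOf a s i)

/-- `wt_HP(D) = ∏_{p ∈ D} wt(p) · ∏_{p ∈ HP(D)} w̃t(p)` for a path starting at `(a, 0)`. -/
def wtHigh (wt wte : ℤ × ℕ → F) (a : ℤ) {L : ℕ} (s : Fin L → Bool) : F :=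
  (∏ i ∈ Finset.range (L + 1), wt (ptOf a s i)) * ∏ i ∈ highPeaks s, wte (ptOf a s i)

/-- `∏_{p ∈ D₁ ∩ D₂} f(p)`, for `D₁` starting at `(-m₁,0)` and `D₂` at `(-m₂,0)`. -/
def interProd (f : ℤ × ℕ → F) (m₁ m₂ : ℕ) {L₁ L₂ : ℕ}
    (s₁ : Fin L₁ → Bool) (s₂ : Fin L₂ → Bool) : F :=
  ∏ x ∈ interPts m₁ m₂ s₁ s₂, f (x, (aht m₁ s₁ x).toNat)

/-- The sum over `(D₁ ≤ ⋯ ≤ D_k) ∈ Dyck^k_{2n}` of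
`wt_V(D₁)⋯wt_V(D_k) ∏_{i=1}^{k-1} ∏_{p ∈ D_i ∩ D_{i+1}} (1 - w̃t(p)⁻¹)`. -/
def weakSum (wt wte : ℤ × ℕ → F) (n k : ℕ) : F :=
  ∑ D ∈ weakTuples n k,
    (∏ i : Fin k, wtVal wt wte (-(n : ℤ) - 2 * (i : ℕ)) (D i)) *
      ∏ j : Fin (k - 1),
        interProd (fun p => 1 - (wte p)⁻¹) (n + 2 * (j : ℕ)) (n + 2 * ((j : ℕ) + 1))
          (D ⟨(j : ℕ), by have := j.isLt; omega⟩)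
          (D ⟨(j : ℕ) + 1, by have := j.isLt; omega⟩)

/-- The sum over `(D₁ < ⋯ < D_k) ∈ Dyck^k_{2n}` of `wt_V(D₁)⋯wt_V(D_k)`. -/
def strictSum (wt wte : ℤ × ℕ → F) (n k : ℕ) : F :=
  ∑ D ∈ strictTuples n k, ∏ i : Fin k, wtVal wt wte (-(n : ℤ) - 2 * (i : ℕ)) (D i)

end Weights

/-! ### Schröder paths.

A path with `L` steps is encoded by `st : Fin L → Fin 3`
(`0` = up-step `(1,1)`, `1` = down-step `(1,-1)`, `2` = horizontal step `(2,0)`). -/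

/-- The horizontal displacement of the `j`-th step. -/
def stepX {L : ℕ} (st : Fin L → Fin 3) (j : ℕ) : ℕ :=
  if h : j < L then (if st ⟨j, h⟩ = 2 then 2 else 1) else 0

/-- The vertical displacement of the `j`-th step. -/
def stepY {L : ℕ} (st : Fin L → Fin 3) (j : ℕ) : ℤ :=
  if h : j < L then (if st ⟨j, h⟩ = 0 then 1 else if st ⟨j, h⟩ = 1 then -1 else 0) else 0

/-- The horizontal position (relative to the start) after `j` steps. -/
def xpos {L : ℕ} (st : Fin L → Fin 3) (j : ℕ) : ℕ := ∑ t ∈ Finset.range j, stepX st t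

/-- The height after `j` steps. -/
def ypos {L : ℕ} (st : Fin L → Fin 3) (j : ℕ) : ℤ := ∑ t ∈ Finset.range j, stepY st t

/-- A (little) Schröder path of horizontal span `2m`: nonnegative heights, ends at
height `0`, and no horizontal step on the `x`-axis. -/
def IsSch (m : ℕ) {L : ℕ} (st : Fin L → Fin 3) : Prop :=
  xpos st L = 2 * m ∧ (∀ j ∈ Finset.range (L + 1), 0 ≤ ypos st j) ∧ ypos st L = 0 ∧
    ∀ j ∈ Finset.range L, stepX st j = 2 → ypos st j ≠ 0

/-- The height of a Schröder path over the relative abscissa `x` (midpoints of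
horizontal steps get the height of that horizontal step). -/
def schHeight {L : ℕ} (st : Fin L → Fin 3) (x : ℕ) : ℤ :=
  ∑ t ∈ Finset.range L, if xpos st (t + 1) ≤ x then stepY st t else 0

/-- The relative abscissa `x` is the midpoint of a horizontal step. -/
def IsHMid {L : ℕ} (st : Fin L → Fin 3) (x : ℕ) : Prop :=
  ∃ j ∈ Finset.range L, stepX st j = 2 ∧ xpos st j + 1 = x

/-- The number of horizontal steps of a Schröder path. -/
def hsCount {L : ℕ} (st : Fin L → Fin 3) : ℕ :=
  ((Finset.range L).filter fun j => stepX st j = 2).card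

/-- `wt_Sch(c, S) = c^{hs(S)} ∏_{p ∈ S} wt(p)` for a Schröder path starting at `(a,0)`. -/
def wtSch {F : Type*} [Field F] (wt : ℤ × ℕ → F) (c : F) (a : ℤ) {L : ℕ}
    (st : Fin L → Fin 3) : F :=
  c ^ hsCount st * ∏ j ∈ Finset.range (L + 1), wt (a + xpos st j, (ypos st j).toNat)

/-- `φ_V(S) = D`: the Dyck path `D` (with `L'` steps) is obtained from the Schröder
path `S` by replacing each horizontal step by a down-step followed by an up-step. -/
def PhiVEq {L L' : ℕ} (st : Fin L → Fin 3) (s : Fin L' → Bool) : Prop :=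
  ∀ x ∈ Finset.range (L' + 1),
    pht s x = schHeight st x - (if IsHMid st x then 1 else 0)

/-- `φ_HP(S) = D`: the Dyck path `D` is obtained from the Schröder path `S` by
replacing each horizontal step by an up-step followed by a down-step. -/
def PhiHPEq {L L' : ℕ} (st : Fin L → Fin 3) (s : Fin L' → Bool) : Prop :=
  ∀ x ∈ Finset.range (L' + 1),
    pht s x = schHeight st x + (if IsHMid st x then 1 else 0)

/-! ### Young diagrams, excited and pleasant diagrams, reverse plane partitions. -/

/-- The cells (1-based, matrix coordinates) of the staircase `δ_m = (m-1, m-2, …, 1)`. -/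
def deltaCells (m : ℕ) : Finset (ℕ × ℕ) :=
  ((Finset.Icc 1 m) ×ˢ (Finset.Icc 1 m)).filter fun c => c.1 + c.2 ≤ m

/-- An excited move inside the Young diagram `lam`. -/
def ExcitedStep (lam : Finset (ℕ × ℕ)) (D D' : Finset (ℕ × ℕ)) : Prop :=
  ∃ i j : ℕ, (i, j) ∈ D ∧ (i + 1, j) ∉ D ∧ (i, j + 1) ∉ D ∧ (i + 1, j + 1) ∉ D ∧
    (i + 1, j + 1) ∈ lam ∧ D' = insert (i + 1, j + 1) (D.erase (i, j))

/-- `D` is an excited diagram of `lam/mu`. -/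
def IsExcited (lam mu D : Finset (ℕ × ℕ)) : Prop :=
  Relation.ReflTransGen (ExcitedStep lam) mu D

/-- `P` is a pleasant diagram of `lam/mu`: a subset of `lam \ D` for an excited diagram `D`. -/
def IsPleasant (lam mu : Finset (ℕ × ℕ)) (P : Finset (ℕ × ℕ)) : Prop :=
  ∃ D, IsExcited lam mu D ∧ P ⊆ lam \ D

/-- `p(lam/mu)`, the number of pleasant diagrams of `lam/mu`. -/
def pleasantCount (lam mu : Finset (ℕ × ℕ)) : ℕ :=
  Set.ncard {P : Finset (ℕ × ℕ) | IsPleasant lam mu P}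

/-- A reverse plane partition on the skew shape `shape`: a filling by nonnegative
integers (vanishing off the shape) weakly increasing along rows and columns. -/
def IsRPP (shape : Finset (ℕ × ℕ)) (f : ℕ × ℕ → ℕ) : Prop :=
  (∀ c, c ∉ shape → f c = 0) ∧
    (∀ i j : ℕ, (i, j) ∈ shape → (i, j + 1) ∈ shape → f (i, j) ≤ f (i, j + 1)) ∧
    ∀ i j : ℕ, (i, j) ∈ shape → (i + 1, j) ∈ shape → f (i, j) ≤ f (i + 1, j)

/-- `∑_{π ∈ RPP(shape)} q^{|π|}` as a formal power series in `q`. -/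
def rppGF (shape : Finset (ℕ × ℕ)) : PowerSeries ℚ :=
  PowerSeries.mk fun N =>
    (Set.ncard {f : ℕ × ℕ → ℕ | IsRPP shape f ∧ ∑ c ∈ shape, f c = N} : ℚ)

/-- `(q; q)_m = ∏_{i=1}^m (1 - q^i)` as a formal power series. -/
def pochPS (m : ℕ) : PowerSeries ℚ :=
  ∏ i ∈ Finset.Icc 1 m, (1 - (PowerSeries.X : PowerSeries ℚ) ^ i)

/-- `E*_N(q) = ∑_{π ∈ Alt_N} q^{maj(κ_N π⁻¹)}` as a formal power series. -/
def EstarPS (N : ℕ) : PowerSeries ℚ :=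
  ∑ π ∈ altPerms N, (PowerSeries.X : PowerSeries ℚ) ^ majKappaInv N π

/-- `E*_m(q)/(q;q)_m` for `m ≥ 0`, and `0` for `m < 0`. -/
def EstarEntry (m : ℤ) : PowerSeries ℚ :=
  if m < 0 then 0 else EstarPS m.toNat * (pochPS m.toNat)⁻¹

/-- The Gaussian binomial coefficient `[N choose M]_q` as a formal power series. -/
def gaussPS (N M : ℕ) : PowerSeries ℚ :=
  pochPS N * (pochPS M * pochPS (N - M))⁻¹

/-! ### Sums over lists in `ℝ≥0∞` -/

theorem tsum_tsum_sum_mul {α β ι : Type*} (s : Finset ι) (c : ι → ENNReal) (f : ι → α → ENNReal)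
    (g : ι → β → ENNReal) :
    (∑' a, ∑' b, ∑ i ∈ s, c i * (f i a * g i b)) =
      ∑ i ∈ s, c i * ((∑' a, f i a) * ∑' b, g i b) := by
  have h (a : α) : (∑' b, ∑ i ∈ s, c i * (f i a * g i b)) =
      ∑ i ∈ s, c i * (f i a * ∑' b, g i b) := by
    rw [Summable.tsum_finsetSum fun _ _ => ENNReal.summable]
    simp only [ENNReal.tsum_mul_left]
  simp only [h]
  rw [Summable.tsum_finsetSum fun _ _ => ENNReal.summable]
  simp only [ENNReal.tsum_mul_left, ENNReal.tsum_mul_right]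

/-- A sum over the lists containing `m` is a sum over the pairs of lists before and after the first
occurrence of `m`. -/
theorem tsum_list_mem {α : Type*} [DecidableEq α] (m : α) (F : List α → ENNReal) :
    (∑' l, if m ∈ l then F l else 0) =
      ∑' σ, ∑' τ, if m ∈ σ then 0 else F (σ ++ m :: τ) := by
  rw [← ENNReal.tsum_prod (f := fun σ τ => if m ∈ σ then 0 else F (σ ++ m :: τ))]
  let s : Set (List α × List α) := {p | m ∉ p.1}
  have hs : (∑' p : List α × List α, if m ∈ p.1 then 0 else F (p.1 ++ m :: p.2)) =
      ∑' p : s, F (p.1.1 ++ m :: p.1.2) := by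
    rw [_root_.tsum_subtype s fun p => F (p.1 ++ m :: p.2)]
    refine tsum_congr fun p => ?_
    by_cases h : m ∈ p.1 <;> simp [s, Set.indicator, h]
  have hinj : Function.Injective fun p : s => p.1.1 ++ m :: p.1.2 := by
    rintro ⟨⟨σ, τ⟩, h⟩ ⟨⟨σ', τ'⟩, h'⟩ e
    simp only [s, Set.mem_ofPred_eq] at h h'
    simp only [List.append_eq_append_iff, List.cons_eq_append_iff, List.cons_eq_cons] at e
    ext1
    aesop
  rw [hs, ← hinj.tsum_eq]
  · refine tsum_congr fun p => ?_
    simp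
  · intro l hl
    have hm : m ∈ l := by
      by_contra h
      simp [h] at hl
    obtain ⟨σ, τ, rfl, h⟩ := List.eq_append_cons_of_mem hm
    exact ⟨⟨(σ, τ), h⟩, rfl⟩

/-! ### Zigzag lists -/

/-- `[a₁, …, a_k]` is zigzag for `r` if `k` is odd and every entry in an even position is
`r`-related to its two neighbours. -/
def Zigzag {α : Type*} (r : α → α → Prop) : List α → Prop
  | [] => False
  | [_] => True
  | [_, _] => False
  | a :: b :: c :: l => r b a ∧ r b c ∧ Zigzag r (c :: l)

theorem zigzag_append_cons {α : Type*} {r : α → α → Prop} {m : α} {τ : List α}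
    (hτ : ∀ x ∈ τ, ¬ r x m) : ∀ σ : List α, (∀ x ∈ σ, r m x ∧ ¬ r x m) →
      (Zigzag r (σ ++ m :: τ) ↔
        σ = [] ∧ τ = [] ∨ Zigzag r σ ∧ Zigzag r τ ∧ ∀ x ∈ τ.head?, r m x)
  | [], _ => by
    rcases τ with _ | ⟨a, _ | ⟨b, τ⟩⟩ <;> simp_all [Zigzag]
  | [a], h => by
    rcases τ with _ | ⟨b, τ⟩
    · simp_all [Zigzag]
    · simp_all [Zigzag]
      tauto
  | [a, b], h => by
    rcases τ with _ | ⟨c, τ⟩ <;> simp_all [Zigzag]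
  | a :: b :: c :: σ, h => by
    have := zigzag_append_cons hτ (c :: σ) fun x hx => h x (by simp_all)
    simp [Zigzag] at this ⊢
    tauto

theorem zigzag_map {α β : Type*} {r : α → α → Prop} {s : β → β → Prop} {f : α → β}
    (h : ∀ a b, s (f a) (f b) ↔ r a b) :
    ∀ l : List α, Zigzag s (l.map f) ↔ Zigzag r l
  | [] => by simp [Zigzag]
  | [_] => by simp [Zigzag]
  | [_, _] => by simp [Zigzag]
  | a :: b :: c :: l => by
    have := zigzag_map h (c :: l)
    simp [Zigzag, h] at this ⊢
    tauto

theorem zigzag_iff_getD {α : Type*} {r : α → α → Prop} (d : α) : ∀ l : List α, Zigzag r l ↔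
    l.length % 2 = 1 ∧ ∀ i, i + 1 < l.length →
      (i % 2 = 0 → r (l.getD (i + 1) d) (l.getD i d)) ∧
      (i % 2 = 1 → r (l.getD i d) (l.getD (i + 1) d))
  | [] => by simp [Zigzag]
  | [_] => by simp [Zigzag]
  | [_, _] => by simp [Zigzag]
  | a :: b :: c :: l => by
    have := zigzag_iff_getD d (c :: l) (r := r)
    simp only [Zigzag, this]
    constructor
    · rintro ⟨h₁, h₂, h₃, h₄⟩
      refine ⟨by simp at h₃ ⊢; omega, fun i hi => ?_⟩
      rcases i with _ | _ | i
      · simpa using h₁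
      · simpa using h₂
      · have := h₄ i (by simp at hi ⊢; omega)
        simpa [Nat.add_mod_right, add_assoc] using this
    · rintro ⟨h₃, h₄⟩
      refine ⟨by simpa using h₄ 0, by simpa using h₄ 1, by simp at h₃ ⊢; omega, fun i hi => ?_⟩
      have := h₄ (i + 2) (by simp at hi ⊢; omega)
      simpa using this

/-! ### Statistics of lists -/

/-- The number of inversions of a list. -/
def listInv : List ℕ → ℕ
  | [] => 0
  | a :: l => l.countP (· < a) + listInv l

/-- The number of non-ascents of a list, the last index being a non-ascent. -/
def listNasc : List ℕ → ℕ
  | [] => 0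
  | [_] => 1
  | a :: b :: l => (if a < b then 0 else 1) + listNasc (b :: l)

/-- The sublist of the entries in even positions (starting to count at `1`). -/
def evens : List ℕ → List ℕ
  | [] => []
  | [_] => []
  | _ :: b :: l => b :: evens l

/-- The number of pairs in `T × U` that form an inversion. -/
def crossInv (T U : Finset ℕ) : ℕ := ∑ a ∈ T, #{b ∈ U | b < a}

theorem listInv_append (τ : List ℕ) : ∀ σ : List ℕ, listInv (σ ++ τ) =
    listInv σ + listInv τ + (σ.map fun a => τ.countP (· < a)).sum
  | [] => by simp [listInv]
  | a :: σ => by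
    simp only [List.cons_append, listInv, listInv_append τ σ, List.countP_append, List.map_cons,
      List.sum_cons]
    ring

theorem countP_lt_eq_card {τ : List ℕ} (hτ : τ.Nodup) (a : ℕ) :
    τ.countP (· < a) = #{b ∈ τ.toFinset | b < a} := by
  rw [List.countP_eq_length_filter, ← List.toFinset_card_of_nodup (hτ.filter _),
    List.toFinset_filter]
  simp

theorem listInv_append_cons {σ τ : List ℕ} {m : ℕ} (hσ : σ.Nodup) (hτ : τ.Nodup)
    (hσm : ∀ x ∈ σ, x < m) (hτm : ∀ x ∈ τ, x < m) :
    listInv (σ ++ m :: τ) =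
      listInv σ + listInv τ + τ.length + crossInv σ.toFinset τ.toFinset := by
  have h₁ : τ.countP (· < m) = τ.length := List.countP_eq_length.2 (by simpa using hτm)
  have h₂ : (σ.map fun a => (m :: τ).countP (· < a)).sum = crossInv σ.toFinset τ.toFinset := by
    rw [crossInv, List.sum_toFinset _ hσ]
    refine congrArg _ (List.map_congr_left fun a ha => ?_)
    rw [← countP_lt_eq_card hτ, List.countP_cons_of_neg]
    simpa using (hσm a ha).le
  rw [listInv_append, h₂, listInv, h₁]
  ring

theorem listNasc_append_cons {τ : List ℕ} {m : ℕ} (hτm : ∀ x ∈ τ, x < m) :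
    ∀ σ : List ℕ, (∀ x ∈ σ, x < m) →
      listNasc (σ ++ m :: τ) = listNasc σ + listNasc τ + if σ = [] then 1 else 0
  | [], _ => by
    rcases τ with _ | ⟨b, τ⟩
    · simp [listNasc]
    · have := hτm b (by simp)
      simp [listNasc, this.not_gt]
      ring
  | [a], h => by
    have h₁ := h a (by simp)
    have h₂ := listNasc_append_cons hτm [] (by simp)
    simp [listNasc, h₁] at h₂ ⊢
    omega
  | a :: b :: σ, h => by
    have := listNasc_append_cons hτm (b :: σ) fun x hx => h x (by simp_all)
    simp [listNasc] at this ⊢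
    omega

theorem mem_of_mem_evens {x : ℕ} : ∀ l : List ℕ, x ∈ evens l → x ∈ l
  | [], h => by simp [evens] at h
  | [_], h => by simp [evens] at h
  | a :: b :: l, h => by
    have := mem_of_mem_evens (x := x) l
    simp [evens] at h ⊢
    tauto

theorem Zigzag.evens_append_cons {r : ℕ → ℕ → Prop} (m : ℕ) (τ : List ℕ) :
    ∀ {σ : List ℕ}, Zigzag r σ → evens (σ ++ m :: τ) = evens σ ++ m :: evens τ
  | [], h => by simp [Zigzag] at h
  | [_], _ => by simp [evens]
  | [_, _], h => by simp [Zigzag] at h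
  | a :: b :: c :: l, h => by
    have := Zigzag.evens_append_cons m τ h.2.2
    simpa [evens] using this

theorem Zigzag.evens_eq_nil_iff {r : ℕ → ℕ → Prop} :
    ∀ {σ : List ℕ}, Zigzag r σ → (evens σ = [] ↔ σ.length = 1)
  | [], h => by simp [Zigzag] at h
  | [_], _ => by simp [evens]
  | [_, _], h => by simp [Zigzag] at h
  | a :: b :: c :: l, h => by simp [evens]

/-- The exponent `inv + nasc` of the even part, on lists. -/
def altWeight (l : List ℕ) : ℕ := listInv l + listNasc (evens l)

theorem altWeight_append_cons {σ τ : List ℕ} {m : ℕ} (hσ : σ.Nodup) (hτ : τ.Nodup)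
    (hσm : ∀ x ∈ σ, x < m) (hτm : ∀ x ∈ τ, x < m) (hσz : Zigzag (· > ·) σ) :
    altWeight (σ ++ m :: τ) =
      (crossInv σ.toFinset τ.toFinset + #τ.toFinset + if #σ.toFinset = 1 then 1 else 0) +
        (altWeight σ + altWeight τ) := by
  rw [altWeight, listInv_append_cons hσ hτ hσm hτm, hσz.evens_append_cons,
    listNasc_append_cons (fun x hx => hτm x (mem_of_mem_evens τ hx)) _
      (fun x hx => hσm x (mem_of_mem_evens σ hx)),
    List.toFinset_card_of_nodup hσ, List.toFinset_card_of_nodup hτ, altWeight, altWeight]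
  simp only [hσz.evens_eq_nil_iff]
  ring

/-! ### The recursion for alternating lists -/

/-- The generating function by `altWeight` of the alternating arrangements of `S`. -/
def altGF (q : ENNReal) (S : Finset ℕ) : ENNReal :=
  ∑' l : List ℕ, if l.Nodup ∧ l.toFinset = S ∧ Zigzag (· > ·) l then q ^ altWeight l else 0

theorem altGF_insert (q : ENNReal) {S : Finset ℕ} {m : ℕ} (hm : ∀ x ∈ S, x < m)
    (hS : S.Nonempty) :
    altGF q (insert m S) = ∑ T ∈ S.powerset,
      q ^ (crossInv T (S \ T) + #(S \ T) + if #T = 1 then 1 else 0) *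
        (altGF q T * altGF q (S \ T)) := by
  have hmS : m ∉ S := fun h => (hm m h).false
  unfold altGF
  rw [← tsum_tsum_sum_mul]
  have h₁ (l : List ℕ) :
      (if l.Nodup ∧ l.toFinset = insert m S ∧ Zigzag (· > ·) l then q ^ altWeight l else 0) =
      if m ∈ l then (if l.Nodup ∧ l.toFinset = insert m S ∧ Zigzag (· > ·) l then
        q ^ altWeight l else 0) else 0 := by
    by_cases h : m ∈ l
    · rw [if_pos h]
    · rw [if_neg h, if_neg]
      rintro ⟨-, h', -⟩
      exact h (List.mem_toFinset.1 (h' ▸ Finset.mem_insert_self m S))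
  rw [tsum_congr h₁, tsum_list_mem]
  refine tsum_congr fun σ => tsum_congr fun τ => ?_
  by_cases h : σ.Nodup ∧ τ.Nodup ∧ Zigzag (· > ·) σ ∧ Zigzag (· > ·) τ ∧ σ.toFinset ⊆ S ∧
      τ.toFinset = S \ σ.toFinset
  · obtain ⟨hσ, hτ, hσz, hτz, hσS, hτS⟩ := h
    have hσm : ∀ x ∈ σ, x < m := fun x hx => hm x (hσS (List.mem_toFinset.2 hx))
    have hτm : ∀ x ∈ τ, x < m := fun x hx =>
      hm x (Finset.sdiff_subset (hτS ▸ List.mem_toFinset.2 hx))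
    have hz : Zigzag (· > ·) (σ ++ m :: τ) := by
      rw [zigzag_append_cons (fun x hx => (hτm x hx).le.not_gt)
        _ (fun x hx => ⟨hσm x hx, (hσm x hx).le.not_gt⟩)]
      exact Or.inr ⟨hσz, hτz, fun x hx => hτm x (List.mem_of_mem_head? hx)⟩
    have hd : List.Disjoint σ τ := fun x hx hx' => by
      have : x ∈ S \ σ.toFinset := hτS ▸ List.mem_toFinset.2 hx'
      exact (Finset.mem_sdiff.1 this).2 (List.mem_toFinset.2 hx)
    have hmσ : m ∉ σ := fun h => (hσm m h).false
    have hmτ : m ∉ τ := fun h => (hτm m h).false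
    have hnd : (σ ++ m :: τ).Nodup := by
      rw [List.nodup_append]
      refine ⟨hσ, List.nodup_cons.2 ⟨hmτ, hτ⟩, ?_⟩
      rintro a ha b hb rfl
      rcases List.mem_cons.1 hb with rfl | hb
      · exact hmσ ha
      · exact hd ha hb
    have hset : (σ ++ m :: τ).toFinset = insert m S := by
      rw [List.toFinset_append, List.toFinset_cons, hτS, Finset.union_insert,
        Finset.union_sdiff_of_subset hσS]
    rw [if_neg hmσ, if_pos ⟨hnd, hset, hz⟩, Finset.sum_eq_single σ.toFinset]
    · rw [if_pos (c := σ.Nodup ∧ _) ⟨hσ, rfl, hσz⟩, if_pos (c := τ.Nodup ∧ _) ⟨hτ, hτS, hτz⟩,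
        altWeight_append_cons hσ hτ hσm hτm hσz, hτS,
        pow_add _ _ (altWeight σ + altWeight τ), pow_add _ (altWeight σ)]
    · intro T _ hT
      rw [if_neg (c := σ.Nodup ∧ _) fun h => hT h.2.1.symm, zero_mul, mul_zero]
    · intro h
      exact absurd (Finset.mem_powerset.2 hσS) h
  · rw [Finset.sum_eq_zero]
    · split_ifs with hmσ h'
      · rfl
      · obtain ⟨hnd, hset, hz⟩ := h'
        refine absurd ?_ h
        rw [List.nodup_append, List.nodup_cons] at hnd
        obtain ⟨hσ, ⟨hmτ, hτ⟩, hd⟩ := hnd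
        have hmem (x : ℕ) (hx : x ∈ σ ∨ x ∈ τ) : x ∈ S := by
          have : x ∈ insert m S := by
            rw [← hset]
            simp
            tauto
          rcases Finset.mem_insert.1 this with rfl | h
          · tauto
          · exact h
        have hSmem (x : ℕ) (hx : x ∈ S) : x ∈ σ ∨ x ∈ τ := by
          have h : x ∈ (σ ++ m :: τ).toFinset := hset ▸ Finset.mem_insert_of_mem hx
          have hxm : x ≠ m := (hm x hx).ne
          simpa [hxm] using h
        rw [zigzag_append_cons (fun x hx => (hm x (hmem x (Or.inr hx))).le.not_gt) _
          (fun x hx => ⟨hm x (hmem x (Or.inl hx)), (hm x (hmem x (Or.inl hx))).le.not_gt⟩)] at hz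
        rcases hz with ⟨rfl, rfl⟩ | ⟨hσz, hτz, -⟩
        · obtain ⟨x, hx⟩ := hS
          simpa using hSmem x hx
        · refine ⟨hσ, hτ, hσz, hτz, fun x hx => hmem x (Or.inl (List.mem_toFinset.1 hx)), ?_⟩
          ext x
          have := hmem x
          have := hSmem x
          have := fun h h' => hd x h x (List.mem_cons_of_mem _ h') rfl
          simp
          tauto
      · rfl
    · intro T hT
      by_cases h₁ : σ.Nodup ∧ σ.toFinset = T ∧ Zigzag (· > ·) σ
      · rw [if_neg (c := _ ∧ _ = S \ T ∧ _), mul_zero, mul_zero]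
        rintro ⟨hτ, hτS, hτz⟩
        obtain ⟨hσ, rfl, hσz⟩ := h₁
        exact h ⟨hσ, hτ, hσz, hτz, Finset.mem_powerset.1 hT, hτS⟩
      · rw [if_neg h₁, zero_mul, mul_zero]

/-! ### The recursion for zigzag sequences -/

/-- The generating function by sum of the sequences `a₁ > a₂ < a₃ > ⋯ < a_N` in `ℕ`, `N` odd. -/
def zigzagGF (q : ENNReal) (N : ℕ) : ENNReal :=
  ∑' l : List ℕ, if l.length = N ∧ Zigzag (· < ·) l then q ^ l.sum else 0

theorem zigzagGF_pos (q : ENNReal) (N : ℕ) :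
    (∑' l : List ℕ, if 0 ∉ l ∧ l.length = N ∧ Zigzag (· < ·) l then q ^ l.sum else 0) =
      q ^ N * zigzagGF q N := by
  rw [zigzagGF, ← ENNReal.tsum_mul_left]
  have hinj : Function.Injective (List.map Nat.succ) :=
    List.map_injective_iff.2 Nat.succ_injective
  rw [← hinj.tsum_eq]
  · refine tsum_congr fun l => ?_
    have hsum : (l.map Nat.succ).sum = l.length + l.sum := by
      induction l with
      | nil => rfl
      | cons a l ih => simp [ih]; omega
    have h₀ : 0 ∉ l.map Nat.succ := by simp
    simp only [h₀, not_false_eq_true, true_and, List.length_map,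
      zigzag_map (r := (· < ·)) (s := (· < ·)) (f := Nat.succ) fun _ _ => Nat.succ_lt_succ_iff]
    split_ifs with h
    · rw [hsum, pow_add, h.1]
    · simp
  · intro l hl
    have h₀ : 0 ∉ l := by
      by_contra h
      simp [h] at hl
    refine ⟨l.map Nat.pred, ?_⟩
    rw [List.map_map]
    refine (List.map_congr_left fun a ha => ?_).trans (List.map_id l)
    exact Nat.succ_pred_eq_of_ne_zero fun h => h₀ (h ▸ ha)

theorem zigzagGF_head_pos (q : ENNReal) (N : ℕ) :
    (∑' l : List ℕ, if l.length = N ∧ Zigzag (· < ·) l ∧ ∀ x ∈ l.head?, 0 < x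
      then q ^ l.sum else 0) = q ^ (if N = 1 then 1 else 0) * zigzagGF q N := by
  by_cases hN : N = 1
  · subst hN
    rw [if_pos rfl, ← zigzagGF_pos]
    refine tsum_congr fun l => ?_
    rcases l with _ | ⟨a, _ | ⟨b, l⟩⟩
    · simp
    · simp [Zigzag, eq_comm, Nat.pos_iff_ne_zero]
    · simp
  · rw [if_neg hN, pow_zero, one_mul, zigzagGF]
    refine tsum_congr fun l => ?_
    rcases l with _ | ⟨a, _ | ⟨b, _ | ⟨c, l⟩⟩⟩
    · simp [Zigzag]
    · simp [Ne.symm hN]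
    · simp [Zigzag]
    · have : b < a → 0 < a := Nat.zero_lt_of_lt
      have : (b < a ∧ b < c ∧ Zigzag (· < ·) (c :: l)) ∧ 0 < a ↔
          b < a ∧ b < c ∧ Zigzag (· < ·) (c :: l) := by tauto
      refine if_congr ?_ rfl rfl
      simp [Zigzag, this]

theorem zigzagGF_succ (q : ENNReal) {M : ℕ} (hM : M ≠ 0) :
    zigzagGF q (M + 1) = q ^ (M + 1) * zigzagGF q (M + 1) +
      ∑ p ∈ antidiagonal M, q ^ (p.1 + if p.2 = 1 then 1 else 0) *
        (zigzagGF q p.1 * zigzagGF q p.2) := by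
  have hsplit : zigzagGF q (M + 1) =
      (∑' l : List ℕ, if 0 ∉ l ∧ l.length = M + 1 ∧ Zigzag (· < ·) l then q ^ l.sum else 0) +
      ∑' l : List ℕ, if 0 ∈ l then
        (if l.length = M + 1 ∧ Zigzag (· < ·) l then q ^ l.sum else 0) else 0 := by
    rw [zigzagGF, ← ENNReal.tsum_add]
    refine tsum_congr fun l => ?_
    by_cases h : 0 ∈ l <;> simp [h]
  refine hsplit.trans ?_
  rw [zigzagGF_pos, tsum_list_mem]
  congr 1
  have hterm (p : ℕ × ℕ) : q ^ (p.1 + if p.2 = 1 then 1 else 0) *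
      (zigzagGF q p.1 * zigzagGF q p.2) = 1 *
      ((∑' l : List ℕ, if 0 ∉ l ∧ l.length = p.1 ∧ Zigzag (· < ·) l then q ^ l.sum else 0) *
      ∑' l : List ℕ, if l.length = p.2 ∧ Zigzag (· < ·) l ∧ ∀ x ∈ l.head?, 0 < x
        then q ^ l.sum else 0) := by
    rw [zigzagGF_pos, zigzagGF_head_pos, pow_add]
    ring
  rw [Finset.sum_congr rfl fun p _ => hterm p, ← tsum_tsum_sum_mul]
  refine tsum_congr fun σ => tsum_congr fun τ => ?_
  by_cases h₀ : 0 ∈ σ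
  · simp [h₀]
  have hσ₀ : ∀ x ∈ σ, 0 < x := fun x hx => Nat.pos_of_ne_zero fun h => h₀ (h ▸ hx)
  rw [if_neg h₀, zigzag_append_cons (fun x _ => Nat.not_lt_zero x) σ
    (fun x hx => ⟨hσ₀ x hx, Nat.not_lt_zero x⟩)]
  by_cases h : σ.length + τ.length = M
  · rw [Finset.sum_eq_single (σ.length, τ.length)]
    · have hlen : (σ ++ 0 :: τ).length = M + 1 := by simp; omega
      have hne : ¬ (σ = [] ∧ τ = []) := by
        rintro ⟨rfl, rfl⟩
        exact hM (by simpa using h.symm)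
      have hsum : (σ ++ 0 :: τ).sum = σ.sum + τ.sum := by simp
      rw [hsum, pow_add]
      simp only [hlen, hne, h₀, false_or, true_and, not_false_eq_true, one_mul]
      by_cases hσ : Zigzag (· < ·) σ
      · simp [hσ]
      · simp [hσ]
    · rintro ⟨a, b⟩ _ hab
      by_cases ha : σ.length = a
      · have hb : τ.length ≠ b := by
          rintro rfl
          exact hab (by rw [ha])
        simp [hb]
      · simp [ha]
    · intro h'
      exact absurd (Finset.HasAntidiagonal.mem_antidiagonal.2 h) h'
  · rw [if_neg, Finset.sum_eq_zero]
    · rintro ⟨a, b⟩ hab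
      by_cases ha : σ.length = a
      · have hb : τ.length ≠ b := by
          rintro rfl
          exact h (by rw [ha]; exact Finset.HasAntidiagonal.mem_antidiagonal.1 hab)
        simp [hb]
      · simp [ha]
    · rintro ⟨h', -⟩
      simp at h'
      omega

/-! ### The `q`-binomial theorem for subsets -/

/-- The `q`-Pochhammer symbol `(q; q)_n`. -/
def qPoch (q : ENNReal) (n : ℕ) : ENNReal := ∏ i ∈ range n, (1 - q ^ (i + 1))

theorem qPoch_succ (q : ENNReal) (n : ℕ) : qPoch q (n + 1) = qPoch q n * (1 - q ^ (n + 1)) :=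
  Finset.prod_range_succ _ _

theorem qPoch_ne_zero {q : ENNReal} (hq : q < 1) (n : ℕ) : qPoch q n ≠ 0 :=
  Finset.prod_ne_zero_iff.2 fun i _ => (tsub_pos_of_lt (pow_lt_one₀ zero_le hq i.succ_ne_zero)).ne'

theorem one_sub_pow_add_pow {q : ENNReal} (hq : q < 1) (n : ℕ) : 1 - q ^ n + q ^ n = 1 :=
  tsub_add_cancel_of_le (pow_le_one₀ zero_le hq.le)

/-- The Pascal-type identity behind the recursion of the `q`-binomial coefficients. -/
theorem one_sub_pow_mul_pow_add {q : ENNReal} (hq : q < 1) (a b : ℕ) :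
    (1 - q ^ a) * q ^ b + (1 - q ^ b) = 1 - q ^ (a + b) := by
  have hfin : q ^ (a + b) ≠ ⊤ := ENNReal.pow_ne_top hq.ne_top
  refine (ENNReal.add_left_inj hfin).1 ?_
  rw [one_sub_pow_add_pow hq, add_right_comm, pow_add, ← add_mul, one_sub_pow_add_pow hq, one_mul,
    add_comm, one_sub_pow_add_pow hq]

theorem crossInv_empty_left (U : Finset ℕ) : crossInv ∅ U = 0 := by simp [crossInv]

theorem crossInv_empty_right (T : Finset ℕ) : crossInv T ∅ = 0 := by simp [crossInv]

theorem crossInv_insert_left {T U : Finset ℕ} {m : ℕ} (hT : m ∉ T) (hU : ∀ x ∈ U, x < m) :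
    crossInv (insert m T) U = #U + crossInv T U := by
  rw [crossInv, Finset.sum_insert hT, Finset.filter_true_of_mem hU, crossInv]

theorem crossInv_insert_right {T U : Finset ℕ} {m : ℕ} (hT : ∀ x ∈ T, x < m) :
    crossInv T (insert m U) = crossInv T U :=
  Finset.sum_congr rfl fun a ha => by rw [Finset.filter_insert, if_neg (hT a ha).not_gt]

/-- The subsets of `S` of a given size, counted by inversions with their complement, give the
`q`-binomial coefficient. -/
theorem sum_powersetCard_crossInv {q : ENNReal} (hq : q < 1) (S : Finset ℕ) :
    ∀ a b : ℕ, a + b = #S →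
      (∑ T ∈ S.powersetCard a, q ^ crossInv T (S \ T)) * (qPoch q a * qPoch q b) =
        qPoch q #S := by
  induction S using Finset.induction_on_max with
  | empty =>
    intro a b hab
    obtain ⟨rfl, rfl⟩ : a = 0 ∧ b = 0 := by simpa using hab
    simp [crossInv, qPoch]
  | insert m S hm ih =>
    have hmS : m ∉ S := fun h => (hm m h).false
    intro a b hab
    rcases a with _ | a
    · obtain rfl : b = #(insert m S) := by omega
      simp [crossInv_empty_left, qPoch]
    rcases b with _ | b
    · have ha : a + 1 = #(insert m S) := by omega
      simp [ha, crossInv_empty_right, qPoch]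
    rw [Finset.card_insert_of_notMem hmS] at hab ⊢
    rw [Finset.powersetCard_succ_insert hmS, Finset.sum_union, Finset.sum_image]
    · have h₁ : ∀ T ∈ S.powersetCard (a + 1),
          q ^ crossInv T (insert m S \ T) = q ^ crossInv T (S \ T) := by
        intro T hT
        have hTS := (Finset.mem_powersetCard.1 hT).1
        rw [Finset.insert_sdiff_of_notMem _ fun h => hmS (hTS h),
          crossInv_insert_right fun x hx => hm x (hTS hx)]
      have h₂ : ∀ T ∈ S.powersetCard a, q ^ crossInv (insert m T) (insert m S \ insert m T) =
          q ^ (b + 1) * q ^ crossInv T (S \ T) := by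
        intro T hT
        obtain ⟨hTS, hTa⟩ := Finset.mem_powersetCard.1 hT
        have hmT : m ∉ T := fun h => hmS (hTS h)
        have hsd : insert m S \ insert m T = S \ T := by
          ext x
          simp only [Finset.mem_sdiff, Finset.mem_insert]
          constructor
          · tauto
          · rintro ⟨hx, hxT⟩
            have := (hm x hx).ne
            tauto
        rw [hsd, crossInv_insert_left hmT fun x hx => hm x (Finset.mem_sdiff.1 hx).1, pow_add,
          Finset.card_sdiff_of_subset hTS, hTa]
        congr 2
        omega
      rw [Finset.sum_congr rfl h₁, Finset.sum_congr rfl h₂, ← Finset.mul_sum]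
      have e₁ := ih (a + 1) b (by omega)
      have e₂ := ih a (b + 1) (by omega)
      generalize (∑ T ∈ S.powersetCard (a + 1), q ^ crossInv T (S \ T)) = A at e₁ ⊢
      generalize (∑ T ∈ S.powersetCard a, q ^ crossInv T (S \ T)) = B at e₂ ⊢
      have hc : #S + 1 = a + 1 + (b + 1) := by omega
      calc (A + q ^ (b + 1) * B) * (qPoch q (a + 1) * qPoch q (b + 1))
          = (B * (qPoch q a * qPoch q (b + 1))) * ((1 - q ^ (a + 1)) * q ^ (b + 1)) +
            (A * (qPoch q (a + 1) * qPoch q b)) * (1 - q ^ (b + 1)) := by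
              rw [qPoch_succ q a, qPoch_succ q b]
              ring
        _ = qPoch q (#S + 1) := by
              rw [e₁, e₂, ← mul_add, one_sub_pow_mul_pow_add hq, qPoch_succ, hc]
    · intro T hT T' hT' h
      have h₁ : m ∉ T := fun h => hmS ((Finset.mem_powersetCard.1 hT).1 h)
      have h₂ : m ∉ T' := fun h => hmS ((Finset.mem_powersetCard.1 hT').1 h)
      rw [← Finset.erase_insert h₁, ← Finset.erase_insert h₂]
      exact congrArg (fun U => U.erase m) h
    · rw [Finset.disjoint_left]
      intro T hT hT'
      obtain ⟨U, -, rfl⟩ := Finset.mem_image.1 hT'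
      exact hmS ((Finset.mem_powersetCard.1 hT).1 (Finset.mem_insert_self m U))

/-! ### Comparison of the two recursions -/

theorem altGF_eq {q : ENNReal} (hq : q < 1) (hZ : ∀ N, zigzagGF q N ≠ ⊤) (n : ℕ) :
    ∀ S : Finset ℕ, #S = n → altGF q S = zigzagGF q n * qPoch q n := by
  induction n using Nat.strong_induction_on with
  | _ n ih =>
    intro S hS
    rcases n with _ | M
    · obtain rfl := Finset.card_eq_zero.1 hS
      have h₁ : altGF q ∅ = 0 := by
        refine ENNReal.tsum_eq_zero.2 fun l => ?_
        rw [if_neg]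
        rintro ⟨-, h, h'⟩
        obtain rfl := List.toFinset_eq_empty_iff l |>.1 h
        exact h'
      have h₂ : zigzagGF q 0 = 0 := by
        refine ENNReal.tsum_eq_zero.2 fun l => ?_
        rw [if_neg]
        rintro ⟨h, h'⟩
        obtain rfl := List.length_eq_zero_iff.1 h
        exact h'
      rw [h₁, h₂, zero_mul]
    obtain ⟨m, U, hm, rfl⟩ : ∃ m U, (∀ x ∈ U, x < m) ∧ S = insert m U := by
      have hne : S.Nonempty := Finset.card_pos.1 (by omega)
      refine ⟨S.max' hne, S.erase (S.max' hne), fun x hx => ?_, ?_⟩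
      · exact Finset.lt_max'_of_mem_erase_max' S hne hx
      · rw [Finset.insert_erase (S.max'_mem hne)]
    have hmU : m ∉ U := fun h => (hm m h).false
    rw [Finset.card_insert_of_notMem hmU, Nat.add_right_cancel_iff] at hS
    rcases Nat.eq_zero_or_pos M with rfl | hM
    · obtain rfl := Finset.card_eq_zero.1 hS
      have h₁ : altGF q (insert m ∅) = 1 := by
        rw [altGF, tsum_eq_single [m]]
        · simp [Zigzag, altWeight, listInv, listNasc, evens]
        · intro l hl
          rw [if_neg]
          rintro ⟨h, h', -⟩
          refine hl ?_
          have : l.length = 1 := by rw [← List.toFinset_card_of_nodup h, h']; simp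
          obtain ⟨x, rfl⟩ := List.length_eq_one_iff.1 this
          simpa using h'
      have h₂ : zigzagGF q 1 = (1 - q)⁻¹ := by
        have hinj : Function.Injective fun a : ℕ => [a] := fun a b h => by simpa using h
        rw [← ENNReal.tsum_geometric, zigzagGF, ← hinj.tsum_eq]
        · simp [Zigzag]
        · intro l hl
          have : l.length = 1 := by
            by_contra h
            simp [h] at hl
          obtain ⟨x, rfl⟩ := List.length_eq_one_iff.1 this
          exact ⟨x, rfl⟩
      have h₃ := qPoch_ne_zero hq 1
      simp only [qPoch, zero_add, Finset.range_one, Finset.prod_singleton, pow_one] at h₃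
      rw [h₁, h₂, qPoch, zero_add, Finset.range_one, Finset.prod_singleton, zero_add, pow_one,
        ENNReal.inv_mul_cancel h₃ (ENNReal.sub_ne_top ENNReal.one_ne_top)]
    have hrec : zigzagGF q (M + 1) * (1 - q ^ (M + 1)) =
        ∑ p ∈ antidiagonal M, q ^ (p.1 + if p.2 = 1 then 1 else 0) *
          (zigzagGF q p.1 * zigzagGF q p.2) := by
      refine (ENNReal.add_right_inj (a := q ^ (M + 1) * zigzagGF q (M + 1))
        (ENNReal.mul_ne_top (ENNReal.pow_ne_top hq.ne_top) (hZ _))).1 ?_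
      rw [← zigzagGF_succ q hM.ne', mul_comm (q ^ (M + 1)), ← mul_add,
        add_comm (q ^ (M + 1)), one_sub_pow_add_pow hq, mul_one]
    rw [qPoch_succ, mul_comm (qPoch q M), ← mul_assoc, hrec,
      altGF_insert q hm (Finset.card_pos.1 (by omega)), Finset.sum_powerset, hS,
      ← Finset.Nat.sum_antidiagonal_swap, Finset.Nat.sum_antidiagonal_eq_sum_range_succ_mk,
      Finset.sum_mul]
    refine Finset.sum_congr rfl fun a ha => ?_
    have haM : a ≤ M := Nat.lt_succ_iff.1 (Finset.mem_range.1 ha)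
    have hterm : ∀ T ∈ U.powersetCard a,
        q ^ (crossInv T (U \ T) + #(U \ T) + if #T = 1 then 1 else 0) *
          (altGF q T * altGF q (U \ T)) =
        q ^ crossInv T (U \ T) * (q ^ ((M - a) + if a = 1 then 1 else 0) *
          (zigzagGF q a * qPoch q a * (zigzagGF q (M - a) * qPoch q (M - a)))) := by
      intro T hT
      obtain ⟨hTU, hTa⟩ := Finset.mem_powersetCard.1 hT
      have hTc : #(U \ T) = M - a := by rw [Finset.card_sdiff_of_subset hTU, hTa, hS]
      rw [ih a (by omega) T hTa, ih (M - a) (by omega) _ hTc, hTc, hTa, add_assoc, pow_add,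
        mul_assoc]
    rw [Finset.sum_congr rfl hterm, ← Finset.sum_mul, ← hS,
      ← sum_powersetCard_crossInv hq U a (M - a) (by omega), hS]
    simp only [Prod.swap]
    ring

/-! ### Sequences sorted by a given permutation -/

theorem tsum_ite_le_pow (r : ENNReal) (c : ℕ) :
    (∑' b : ℕ, if c ≤ b then r ^ b else 0) = r ^ c * (1 - r)⁻¹ := by
  rw [← ENNReal.tsum_geometric, ← ENNReal.tsum_mul_left, ← (add_left_injective c).tsum_eq]
  · refine tsum_congr fun b => ?_
    rw [if_pos (Nat.le_add_left c b), pow_add, mul_comm]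
  · intro b hb
    have : c ≤ b := by
      by_contra h
      simp [h] at hb
    exact ⟨b - c, Nat.sub_add_cancel this⟩

/-- The generating function of the sequences `h₀, …, h_{k-1}` with `h_{i+1} + d_i ≤ h_i`,
where `h_k = a`. -/
theorem tsum_chain {q : ENNReal} (hq : q < 1) (d : ℕ → ℕ) (k : ℕ) : ∀ a : ℕ,
    (∑' h : Fin k → ℕ, if ∀ i : Fin k, (Fin.snoc h a : Fin (k + 1) → ℕ) i.succ + d i ≤ h i
      then q ^ (∑ i, h i) else 0) * qPoch q k = q ^ (k * a + ∑ i ∈ range k, (i + 1) * d i) := by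
  induction k with
  | zero =>
    intro a
    rw [tsum_fintype]
    simp [qPoch]
  | succ k ih =>
    intro a
    rw [← (Fin.snocEquiv fun _ : Fin (k + 1) => ℕ).tsum_eq]
    have h₁ (p : ℕ × (Fin k → ℕ)) :
        (if ∀ i : Fin (k + 1),
          (Fin.snoc (Fin.snocEquiv (fun _ : Fin (k + 1) => ℕ) p) a : Fin (k + 1 + 1) → ℕ) i.succ +
            d i ≤ Fin.snocEquiv (fun _ : Fin (k + 1) => ℕ) p i
        then q ^ (∑ i, Fin.snocEquiv (fun _ : Fin (k + 1) => ℕ) p i) else 0) =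
        (if a + d k ≤ p.1 then q ^ p.1 else 0) *
          (if ∀ i : Fin k, (Fin.snoc p.2 p.1 : Fin (k + 1) → ℕ) i.succ + d i ≤ p.2 i
            then q ^ (∑ i, p.2 i) else 0) := by
      obtain ⟨b, h⟩ := p
      simp only [Fin.forall_fin_succ', Fin.sum_univ_castSucc, Fin.snocEquiv_apply,
        Fin.succ_castSucc, Fin.snoc_castSucc, Fin.val_castSucc,
        Fin.succ_last, Fin.snoc_last, Fin.val_last]
      by_cases h₁ : a + d k ≤ b
      · simp [h₁, pow_add, mul_comm]
      · simp [h₁]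
    rw [tsum_congr h₁, ENNReal.tsum_prod (f := fun b h =>
      (if a + d k ≤ b then q ^ b else 0) *
          (if ∀ i : Fin k, (Fin.snoc h b : Fin (k + 1) → ℕ) i.succ + d i ≤ h i
            then q ^ (∑ i, h i) else 0))]
    simp only [ENNReal.tsum_mul_left]
    rw [qPoch_succ, ← mul_assoc, ← ENNReal.tsum_mul_right]
    have h₂ (b : ℕ) : (if a + d k ≤ b then q ^ b else 0) *
        (∑' h : Fin k → ℕ, if ∀ i : Fin k, (Fin.snoc h b : Fin (k + 1) → ℕ) i.succ + d i ≤ h i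
            then q ^ (∑ i, h i) else 0) * qPoch q k =
        q ^ (∑ i ∈ range k, (i + 1) * d i) * if a + d k ≤ b then (q ^ (k + 1)) ^ b else 0 := by
      rw [mul_assoc, ih]
      split_ifs
      · rw [← pow_mul, ← pow_add, ← pow_add]
        congr 1
        ring
      · simp
    have h₃ : 1 - q ^ (k + 1) ≠ 0 :=
      (tsub_pos_of_lt (pow_lt_one₀ zero_le hq k.succ_ne_zero)).ne'
    rw [tsum_congr h₂, ENNReal.tsum_mul_left, tsum_ite_le_pow, mul_assoc, mul_assoc,
      ENNReal.inv_mul_cancel h₃ (ENNReal.sub_ne_top ENNReal.one_ne_top), mul_one, ← pow_mul,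
      ← pow_add, Finset.sum_range_succ]
    congr 1
    ring

theorem eq_sort_toDual_iff {M : ℕ} (g : Fin (M + 1) → ℕ) (u : Equiv.Perm (Fin (M + 1))) :
    u = Tuple.sort (OrderDual.toDual ∘ g) ↔ ∀ i : Fin M,
      g (u i.succ) + (if u i.succ < u i.castSucc then 1 else 0) ≤ g (u i.castSucc) := by
  let key : Fin (M + 1) → ℕᵒᵈ ×ₗ Fin (M + 1) := fun i => toLex (OrderDual.toDual (g (u i)), u i)
  have h₁ : u = Tuple.sort (OrderDual.toDual ∘ g) ↔ StrictMono key := by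
    rw [Tuple.eq_sort_iff]
    constructor
    · rintro ⟨hm, ht⟩ i j hij
      rw [Prod.Lex.lt_iff]
      rcases (hm hij.le).lt_or_eq with h | h
      · exact Or.inl h
      · exact Or.inr ⟨h, ht i j hij h⟩
    · intro h
      refine ⟨fun i j hij => ?_, fun i j hij he => ?_⟩
      · rcases hij.lt_or_eq with hij | rfl
        · rcases Prod.Lex.lt_iff.1 (h hij) with h | h
          · exact h.le
          · exact h.1.le
        · exact le_rfl
      · rcases Prod.Lex.lt_iff.1 (h hij) with h | h
        · exact absurd he h.ne
        · exact h.2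
  rw [h₁, Fin.strictMono_iff_lt_succ]
  refine forall_congr' fun i => ?_
  rw [Prod.Lex.lt_iff]
  have hne : u i.succ ≠ u i.castSucc := fun h =>
    Fin.castSucc_lt_succ.ne' (u.injective h)
  change OrderDual.toDual (g (u i.castSucc)) < OrderDual.toDual (g (u i.succ)) ∨
    OrderDual.toDual (g (u i.castSucc)) = OrderDual.toDual (g (u i.succ)) ∧
      u i.castSucc < u i.succ ↔ _
  rw [OrderDual.toDual_lt_toDual, OrderDual.toDual_inj]
  split_ifs with h
  · have := h.le.not_gt
    constructor
    · rintro (h | h)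
      · exact h
      · tauto
    · exact Or.inl
  · have : u i.castSucc < u i.succ := lt_of_le_of_ne (not_lt.1 h) hne.symm
    simp only [this, and_true, add_zero]
    omega

theorem word_of_lt {N : ℕ} (u : Equiv.Perm (Fin N)) {i : ℕ} (h : i < N) :
    word u (i + 1) = u ⟨i, h⟩ + 1 := by
  simp [word, Nat.succ_le_of_lt h]

theorem majW_word {M : ℕ} (u : Equiv.Perm (Fin (M + 1))) : majW (M + 1) (word u) =
    ∑ i ∈ range (M + 1), (i + 1) *
      if i < M ∧ word u (i + 2) < word u (i + 1) then 1 else 0 := by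
  rw [majW, Finset.sum_range_succ, Nat.add_sub_cancel, ← Finset.Ico_add_one_right_eq_Icc,
    Finset.sum_Ico_eq_sum_range]
  simp only [lt_irrefl, false_and, if_false, mul_zero, add_zero, Nat.add_sub_cancel]
  refine Finset.sum_congr rfl fun i hi => ?_
  rw [add_comm 1 i]
  simp [Finset.mem_range.1 hi]

/-- The sequences sorted by `u` are counted by the major index of `u`. -/
theorem tsum_eq_sort {q : ENNReal} (hq : q < 1) {N : ℕ} (u : Equiv.Perm (Fin N)) :
    (∑' g : Fin N → ℕ, if u = Tuple.sort (OrderDual.toDual ∘ g) then q ^ (∑ i, g i) else 0) *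
      qPoch q N = q ^ majW N (word u) := by
  rcases N with _ | M
  · rw [tsum_fintype]
    have h (g : Fin 0 → ℕ) : u = Tuple.sort (OrderDual.toDual ∘ g) := Subsingleton.elim _ _
    simp only [if_pos (h _)]
    simp [qPoch, majW]
  have h := tsum_chain hq
    (fun i => if i < M ∧ word u (i + 2) < word u (i + 1) then 1 else 0) (M + 1) 0
  rw [← majW_word, mul_zero, zero_add] at h
  rw [← h, ← (u.arrowCongr (Equiv.refl ℕ)).tsum_eq]
  congr 1
  refine tsum_congr fun g => ?_
  have hsum : ∑ i, (u.arrowCongr (Equiv.refl ℕ)) g i = ∑ i, g i := u.symm.sum_comp g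
  rw [hsum]
  refine if_congr ?_ rfl rfl
  rw [eq_sort_toDual_iff, Fin.forall_fin_succ']
  have hlast : (Fin.snoc g 0 : Fin (M + 1 + 1) → ℕ) (Fin.last M).succ +
      (if ((Fin.last M : Fin (M + 1)) : ℕ) < M ∧ word u ((Fin.last M : Fin (M + 1)) + 2) <
        word u ((Fin.last M : Fin (M + 1)) + 1) then 1 else 0) ≤ g (Fin.last M) := by
    simp [Fin.succ_last]
  rw [and_iff_left hlast]
  refine forall_congr' fun i => ?_
  have h₁ : word u (i + 1) = u i.castSucc + 1 := word_of_lt u (i.2.trans (Nat.lt_succ_self M))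
  have h₂ : word u (i + 2) = u i.succ + 1 := word_of_lt u (Nat.succ_lt_succ i.2)
  simp [h₁, h₂, Fin.succ_castSucc, Equiv.arrowCongr, - Fin.castSucc_succ]

/-! ### The permutation `η` and the major index -/

theorem etaNat_sub_one_lt {N j : ℕ} (h : j < N) : etaNat N (j + 1) - 1 < N := by
  unfold etaNat
  split_ifs <;> omega

theorem etaNat_etaNat {N j : ℕ} (h : j < N) :
    etaNat N (etaNat N (j + 1) - 1 + 1) - 1 = j := by
  unfold etaNat
  split_ifs <;> omega

/-- The involution `(1,2)(3,4)⋯` as a permutation of `Fin N`. -/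
def etaPerm (N : ℕ) : Equiv.Perm (Fin N) where
  toFun j := ⟨etaNat N (j + 1) - 1, etaNat_sub_one_lt j.2⟩
  invFun j := ⟨etaNat N (j + 1) - 1, etaNat_sub_one_lt j.2⟩
  left_inv j := Fin.ext (etaNat_etaNat j.2)
  right_inv j := Fin.ext (etaNat_etaNat j.2)

theorem etaPerm_val {N : ℕ} (j : Fin N) : (etaPerm N j : ℕ) = etaNat N (j + 1) - 1 := rfl

theorem word_symm_trans_etaPerm {N : ℕ} (π : Equiv.Perm (Fin N)) (i : ℕ) :
    word (π.symm.trans (etaPerm N)) i = etaNat N (word π.symm i) := by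
  unfold word
  split_ifs with h
  · have : etaNat N ((π.symm ⟨i - 1, by omega⟩ : ℕ) + 1) ≠ 0 := by
      unfold etaNat
      split_ifs <;> omega
    rw [Equiv.trans_apply, etaPerm_val]
    omega
  · simp [etaNat]

theorem majEtaInv_eq {N : ℕ} (π : Equiv.Perm (Fin N)) :
    majEtaInv N π = majW N (word (π.symm.trans (etaPerm N))) := by
  rw [majEtaInv]
  congr 1
  exact funext fun i => (word_symm_trans_etaPerm π i).symm

theorem isAltW_word_iff {N : ℕ} (π : Equiv.Perm (Fin N)) : IsAltW N (word π) ↔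
    ∀ i (h : i + 1 < N),
      (i % 2 = 0 → π ⟨i, by omega⟩ < π ⟨i + 1, h⟩) ∧
      (i % 2 = 1 → π ⟨i + 1, h⟩ < π ⟨i, by omega⟩) := by
  constructor
  · intro H i h
    have := H (i + 1) (by simp; omega)
    rw [word_of_lt π h, word_of_lt π (i.lt_succ_self.trans h)] at this
    simp only [Fin.lt_def]
    omega
  · intro H i hi
    rw [Finset.mem_Icc] at hi
    obtain ⟨j, rfl⟩ := Nat.exists_eq_add_of_le' hi.1
    have h : j + 1 < N := by omega
    have := H j h
    rw [word_of_lt π h, word_of_lt π (j.lt_succ_self.trans h)]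
    simp only [Fin.lt_def] at this
    omega

/-- A sum over the lists of length `N` is a sum over the functions on `Fin N`. -/
theorem tsum_list_length {α : Type*} (N : ℕ) (F : List α → ENNReal) :
    (∑' l : List α, if l.length = N then F l else 0) = ∑' f : Fin N → α, F (List.ofFn f) := by
  have hinj : Function.Injective fun f : Fin N → α => List.ofFn f := List.ofFn_injective
  rw [← hinj.tsum_eq]
  · simp
  · intro l hl
    have : l.length = N := by
      by_contra h
      simp [h] at hl
    subst this
    exact ⟨l.get, List.ofFn_get l⟩

theorem zigzag_ofFn_iff {α : Type*} {r : α → α → Prop} {N : ℕ} (hN : N % 2 = 1) (f : Fin N → α) :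
    Zigzag r (List.ofFn f) ↔ ∀ i (h : i + 1 < N),
      (i % 2 = 0 → r (f ⟨i + 1, h⟩) (f ⟨i, by omega⟩)) ∧
      (i % 2 = 1 → r (f ⟨i, by omega⟩) (f ⟨i + 1, h⟩)) := by
  rw [zigzag_iff_getD (f ⟨0, by omega⟩), List.length_ofFn, and_iff_right hN]
  refine forall_congr' fun i => forall_congr' fun h => ?_
  have h' : i < N := by omega
  simp [h, h']

theorem zigzagGF_of_even (q : ENNReal) {N : ℕ} (hN : N % 2 = 0) : zigzagGF q N = 0 := by
  refine ENNReal.tsum_eq_zero.2 fun l => if_neg ?_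
  rintro ⟨rfl, h⟩
  have := ((zigzag_iff_getD 0 l).1 h).1
  omega

theorem zigzagGF_eq_tsum (q : ENNReal) (N : ℕ) : zigzagGF q N =
    ∑' f : Fin N → ℕ, if Zigzag (· < ·) (List.ofFn f) then q ^ ∑ i, f i else 0 := by
  have := tsum_list_length N fun l : List ℕ => if Zigzag (· < ·) l then q ^ l.sum else 0
  simp only [List.sum_ofFn] at this
  rw [← this, zigzagGF]
  refine tsum_congr fun l => ?_
  split_ifs <;> tauto

theorem sort_toDual_symm_lt_iff {N : ℕ} (g : Fin N → ℕ) {x y : Fin N} (h : y < x) :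
    (Tuple.sort (OrderDual.toDual ∘ g)).symm x < (Tuple.sort (OrderDual.toDual ∘ g)).symm y ↔
      g y < g x := by
  set u := Tuple.sort (OrderDual.toDual ∘ g) with hu
  obtain ⟨hm, ht⟩ := Tuple.eq_sort_iff.1 hu
  constructor
  · intro hlt
    have h₁ := hm hlt.le
    simp only [Function.comp_apply, Equiv.apply_symm_apply, OrderDual.toDual_le_toDual] at h₁
    refine h₁.lt_of_ne fun he => ?_
    have := ht _ _ hlt (by simp [he])
    simp only [Equiv.apply_symm_apply] at this
    exact absurd this h.not_gt
  · intro hlt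
    by_contra hle
    have h₁ := hm (not_lt.1 hle)
    simp only [Function.comp_apply, Equiv.apply_symm_apply, OrderDual.toDual_le_toDual] at h₁
    omega

theorem zigzag_comp_etaPerm_iff {N : ℕ} (hN : N % 2 = 1) (g : Fin N → ℕ) :
    Zigzag (· < ·) (List.ofFn fun i => g (etaPerm N i)) ↔
      (etaPerm N).trans (Tuple.sort (OrderDual.toDual ∘ g)).symm ∈ altPerms N := by
  rw [altPerms, Finset.mem_filter, and_iff_right (Finset.mem_univ _), isAltW_word_iff,
    zigzag_ofFn_iff hN]
  refine forall_congr' fun i => forall_congr' fun h => and_congr ?_ ?_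
  · refine forall_congr' fun hi => ?_
    rw [Equiv.trans_apply, Equiv.trans_apply, sort_toDual_symm_lt_iff]
    rw [Fin.lt_def, etaPerm_val, etaPerm_val]
    simp only [etaNat]
    split_ifs <;> omega
  · refine forall_congr' fun hi => ?_
    rw [Equiv.trans_apply, Equiv.trans_apply, sort_toDual_symm_lt_iff]
    rw [Fin.lt_def, etaPerm_val, etaPerm_val]
    simp only [etaNat]
    split_ifs <;> omega

theorem zigzagGF_mul_qPoch {q : ENNReal} (hq : q < 1) {N : ℕ} (hN : N % 2 = 1) :
    zigzagGF q N * qPoch q N = ∑ π ∈ altPerms N, q ^ majEtaInv N π := by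
  have h₁ : zigzagGF q N = ∑' g : Fin N → ℕ, ∑ π ∈ altPerms N,
      if π.symm.trans (etaPerm N) = Tuple.sort (OrderDual.toDual ∘ g) then q ^ ∑ i, g i
      else 0 := by
    rw [zigzagGF_eq_tsum, ← ((etaPerm N).symm.arrowCongr (Equiv.refl ℕ)).tsum_eq]
    refine tsum_congr fun g => ?_
    have hsum : ∑ i, ((etaPerm N).symm.arrowCongr (Equiv.refl ℕ)) g i = ∑ i, g i :=
      Equiv.sum_comp (etaPerm N) g
    rw [hsum]
    have h (π : Equiv.Perm (Fin N)) :
        π.symm.trans (etaPerm N) = Tuple.sort (OrderDual.toDual ∘ g) ↔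
          (etaPerm N).trans (Tuple.sort (OrderDual.toDual ∘ g)).symm = π := by
      constructor
      · intro h
        rw [← h]
        ext i
        simp
      · rintro rfl
        ext i
        simp
    simp only [h, Finset.sum_ite_eq]
    exact if_congr (zigzag_comp_etaPerm_iff hN g) rfl rfl
  rw [h₁, Summable.tsum_finsetSum fun _ _ => ENNReal.summable, Finset.sum_mul]
  refine Finset.sum_congr rfl fun π _ => ?_
  rw [tsum_eq_sort hq, majEtaInv_eq]

theorem zigzagGF_ne_top {q : ENNReal} (hq : q < 1) (N : ℕ) : zigzagGF q N ≠ ⊤ := by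
  rcases Nat.mod_two_eq_zero_or_one N with hN | hN
  · simp [zigzagGF_of_even q hN]
  · intro h
    have := zigzagGF_mul_qPoch hq hN
    rw [h, ENNReal.top_mul (qPoch_ne_zero hq N)] at this
    exact ENNReal.sum_ne_top.2 (fun π _ => ENNReal.pow_ne_top hq.ne_top) this.symm

/-! ### Statistics of words and of lists -/

theorem invW_eq_sum (N : ℕ) (w : ℕ → ℕ) : invW N w =
    ∑ i ∈ range N, ∑ j ∈ range N, if i < j ∧ w (j + 1) < w (i + 1) then 1 else 0 := by
  rw [invW, Finset.card_filter, Finset.sum_product]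
  simp only [← Finset.Ico_add_one_right_eq_Icc, Finset.sum_Ico_eq_sum_range,
    Nat.add_sub_cancel, add_comm 1, add_lt_add_iff_right]

theorem nascW_eq_sum (m : ℕ) (w : ℕ → ℕ) : nascW m w =
    ∑ i ∈ range m, if i + 1 = m ∨ ¬ w (i + 1) < w (i + 2) then 1 else 0 := by
  rw [nascW, Finset.card_filter]
  simp only [← Finset.Ico_add_one_right_eq_Icc, Finset.sum_Ico_eq_sum_range,
    Nat.add_sub_cancel, add_comm 1]

theorem countP_ofFn {α : Type*} (p : α → Bool) (N : ℕ) : ∀ f : ℕ → α,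
    (List.ofFn fun i : Fin N => f i).countP p = ∑ i ∈ range N, if p (f i) then 1 else 0 := by
  induction N with
  | zero => simp
  | succ N ih =>
    intro f
    rw [List.ofFn_succ, List.countP_cons, Finset.sum_range_succ']
    exact congrArg₂ (· + ·) (ih fun i => f (i + 1)) rfl

theorem listInv_ofFn (N : ℕ) : ∀ w : ℕ → ℕ,
    listInv (List.ofFn fun i : Fin N => w (i + 1)) = invW N w := by
  induction N with
  | zero => simp [listInv, invW_eq_sum]
  | succ N ih =>
    intro w
    have h := ih fun i => w (i + 1)
    have h' := countP_ofFn (fun b => decide (b < w 1)) N fun i => w (i + 2)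
    rw [invW_eq_sum] at h ⊢
    rw [List.ofFn_succ, listInv, Finset.sum_range_succ']
    simp only [Finset.sum_range_succ' _ N]
    simp [add_assoc] at h h' ⊢
    rw [h, h', add_comm]

theorem listNasc_ofFn (m : ℕ) : ∀ w : ℕ → ℕ,
    listNasc (List.ofFn fun i : Fin m => w (i + 1)) = nascW m w := by
  induction m with
  | zero => simp [listNasc, nascW_eq_sum]
  | succ m ih =>
    intro w
    rcases m with _ | m
    · simp [listNasc, nascW_eq_sum, Finset.filter_singleton]
    · have h := ih fun i => w (i + 1)
      rw [nascW_eq_sum] at h ⊢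
      rw [List.ofFn_succ] at h
      rw [List.ofFn_succ, List.ofFn_succ, listNasc, Finset.sum_range_succ']
      simp [add_assoc] at h ⊢
      rw [h, add_comm]
      congr 1
      split_ifs <;> omega

theorem evens_ofFn (n : ℕ) : ∀ w : ℕ → ℕ,
    evens (List.ofFn fun i : Fin (2 * n + 1) => w (i + 1)) =
      List.ofFn fun i : Fin n => w (2 * (i + 1)) := by
  induction n with
  | zero => simp [evens]
  | succ n ih =>
    intro w
    have h := ih fun i => w (i + 2)
    rw [show 2 * (n + 1) + 1 = 2 * n + 1 + 1 + 1 by ring, List.ofFn_succ, List.ofFn_succ, evens,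
      List.ofFn_succ]
    simp [add_assoc, mul_add] at h ⊢
    exact h

theorem ofFn_word {N : ℕ} (π : Equiv.Perm (Fin N)) :
    (List.ofFn fun i : Fin N => word π (i + 1)) = List.ofFn fun i => (π i : ℕ) + 1 := by
  congr 1
  exact funext fun i => word_of_lt π i.2

theorem altWeight_word {n : ℕ} (π : Equiv.Perm (Fin (2 * n + 1))) :
    altWeight (List.ofFn fun i => (π i : ℕ) + 1) =
      invW (2 * n + 1) (word π) + nascW n (evenWord π) := by
  rw [← ofFn_word, altWeight, listInv_ofFn, evens_ofFn, ← listNasc_ofFn]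
  rfl

theorem exists_perm_of_toFinset_eq {N : ℕ} {l : List ℕ} (hl : l.Nodup)
    (h : l.toFinset = Finset.Icc 1 N) :
    ∃ π : Equiv.Perm (Fin N), (List.ofFn fun i => (π i : ℕ) + 1) = l := by
  have hlen : l.length = N := by
    rw [← List.toFinset_card_of_nodup hl, h, Nat.card_Icc, Nat.add_sub_cancel]
  subst hlen
  have hmem (i : Fin l.length) : 1 ≤ l.get i ∧ l.get i ≤ l.length := by
    rw [← Finset.mem_Icc, ← h, List.mem_toFinset]
    exact l.get_mem i
  let f : Fin l.length → Fin l.length := fun i => ⟨l.get i - 1, by have := hmem i; omega⟩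
  have hf : Function.Injective f := by
    intro i j hij
    have h₁ := hmem i
    have h₂ := hmem j
    refine hl.injective_get ?_
    have : l.get i - 1 = l.get j - 1 := congrArg Fin.val hij
    omega
  refine ⟨Equiv.ofBijective f (Finite.injective_iff_bijective.1 hf), ?_⟩
  conv_rhs => rw [← List.ofFn_get l]
  congr 1
  exact funext fun i => Nat.sub_add_cancel (hmem i).1

theorem ofFn_perm_nodup {N : ℕ} (π : Equiv.Perm (Fin N)) :
    (List.ofFn fun i => (π i : ℕ) + 1).Nodup :=
  List.nodup_ofFn.2 fun _ _ h => π.injective (Fin.ext (Nat.succ_injective h))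

theorem ofFn_perm_toFinset {N : ℕ} (π : Equiv.Perm (Fin N)) :
    (List.ofFn fun i => (π i : ℕ) + 1).toFinset = Finset.Icc 1 N := by
  refine Finset.eq_of_subset_of_card_le (fun x hx => ?_) ?_
  · rw [List.mem_toFinset, List.mem_ofFn] at hx
    obtain ⟨i, rfl⟩ := hx
    rw [Finset.mem_Icc]
    exact ⟨Nat.le_add_left _ _, (π i).2⟩
  · rw [List.toFinset_card_of_nodup (ofFn_perm_nodup π)]
    simp

theorem altGF_Icc (q : ENNReal) (n : ℕ) : altGF q (Finset.Icc 1 (2 * n + 1)) =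
    ∑ π ∈ altPerms (2 * n + 1), q ^ (invW (2 * n + 1) (word π) + nascW n (evenWord π)) := by
  have hinj : Function.Injective fun π : Equiv.Perm (Fin (2 * n + 1)) =>
      List.ofFn fun i => (π i : ℕ) + 1 := by
    intro π π' h
    ext i
    exact Nat.succ_injective (congrFun (List.ofFn_injective h) i)
  rw [altGF, ← hinj.tsum_eq, tsum_fintype, altPerms, Finset.sum_filter]
  · refine Finset.sum_congr rfl fun π _ => ?_
    rw [altWeight_word]
    refine if_congr ?_ rfl rfl
    rw [and_iff_right (ofFn_perm_nodup π), and_iff_right (ofFn_perm_toFinset π),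
      zigzag_ofFn_iff (by omega), isAltW_word_iff]
    simp
  · intro l hl
    have h : l.Nodup ∧ l.toFinset = Finset.Icc 1 (2 * n + 1) := by
      by_contra h
      exact hl (if_neg fun h' => h ⟨h'.1, h'.2.1⟩)
    exact exists_perm_of_toFinset_eq h.1 h.2

theorem sum_pow_majEtaInv_eq {q : ENNReal} (hq : q < 1) (n : ℕ) :
    ∑ π ∈ altPerms (2 * n + 1), q ^ majEtaInv (2 * n + 1) π =
      ∑ π ∈ altPerms (2 * n + 1), q ^ (invW (2 * n + 1) (word π) + nascW n (evenWord π)) := by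
  rw [← altGF_Icc, altGF_eq hq (zigzagGF_ne_top hq) (2 * n + 1) _ (by simp),
    zigzagGF_mul_qPoch hq (by omega)]

theorem statement_6 (n : ℕ) :
    (∑ π ∈ altPerms (2 * n + 1), (Polynomial.X : Polynomial ℤ) ^ majEtaInv (2 * n + 1) π) =
      ∑ π ∈ altPerms (2 * n + 1),
        (Polynomial.X : Polynomial ℤ) ^ (invW (2 * n + 1) (word π) + nascW n (evenWord π)) := by
  refine Polynomial.map_injective (Int.castRingHom ℝ) Int.cast_injective ?_
  refine Polynomial.eq_of_infinite_eval_eq _ _ ((Set.Ioo_infinite zero_lt_one).mono ?_)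
  rintro x ⟨hx₀, hx₁⟩
  have h := sum_pow_majEtaInv_eq (ENNReal.ofReal_lt_one.2 hx₁) n
  simp only [← ENNReal.ofReal_pow hx₀.le,
    ← ENNReal.ofReal_sum_of_nonneg fun _ _ => pow_nonneg hx₀.le _] at h
  rw [ENNReal.ofReal_eq_ofReal_iff (Finset.sum_nonneg fun _ _ => pow_nonneg hx₀.le _)
    (Finset.sum_nonneg fun _ _ => pow_nonneg hx₀.le _)] at h
  simpa [Polynomial.map_sum, Polynomial.eval_finsetSum] using h

end Paper
end
end

section
/- For every positive integer n, the identity Σ_{π∈Alt_{2n}} q^{maj(κ_{2n}π^{-1})} = Σ_{π∈Alt_{2n}} q^{inv(π)−asc(π_e)} holds (as an identity of Laurent polynomials in q; in fact all exponents on the right are nonnegative). -/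
open Finset

attribute [local instance 10] Classical.propDecidable

noncomputable section

namespace Paper

/-! ### Shuffles of lists and Gaussian binomial coefficients. -/

/-- The list of all shuffles of two lists. -/
def shuffles : List ℕ → List ℕ → List (List ℕ)
  | [], v => [v]
  | a :: u, [] => [a :: u]
  | a :: u, b :: v =>
      (shuffles u (b :: v)).map (a :: ·) ++ (shuffles (a :: u) v).map (b :: ·)
termination_by u v => u.length + v.length

lemma shuffles_nil_left (v : List ℕ) : shuffles [] v = [v] := by simp [shuffles]

lemma shuffles_nil_right (u : List ℕ) : shuffles u [] = [u] := by cases u <;> simp [shuffles]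

lemma shuffles_cons_cons (a b : ℕ) (u v : List ℕ) :
    shuffles (a :: u) (b :: v) =
      (shuffles u (b :: v)).map (a :: ·) ++ (shuffles (a :: u) v).map (b :: ·) := by
  rw [shuffles]

lemma mem_shuffles_iff (p : ℕ → Bool) (u v w : List ℕ) (hu : ∀ a ∈ u, p a = true)
    (hv : ∀ b ∈ v, p b = false) :
    w ∈ shuffles u v ↔ w.filter p = u ∧ w.filter (fun x => !p x) = v := by
  induction u, v using shuffles.induct generalizing w with
  | case1 v =>
    rw [shuffles_nil_left, List.mem_singleton]
    constructor
    · rintro rfl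
      refine ⟨by simpa using hv, List.filter_eq_self.2 (by simpa using hv)⟩
    · rintro ⟨h1, h2⟩
      rw [← h2, eq_comm, List.filter_eq_self]
      simpa using h1
  | case2 a u =>
    rw [shuffles_nil_right, List.mem_singleton]
    constructor
    · rintro rfl
      refine ⟨List.filter_eq_self.2 hu, by simpa using hu⟩
    · rintro ⟨h1, h2⟩
      rw [← h1, eq_comm, List.filter_eq_self]
      simpa using h2
  | case3 a u b v ih1 ih2 =>
    have ha : p a = true := hu a (by simp)
    have hb : p b = false := hv b (by simp)
    have hu' : ∀ a ∈ u, p a = true := fun x hx => hu x (by simp [hx])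
    have hv' : ∀ b ∈ v, p b = false := fun x hx => hv x (by simp [hx])
    rw [shuffles_cons_cons, List.mem_append, List.mem_map, List.mem_map]
    cases w with
    | nil => simp
    | cons c w =>
      simp only [List.cons.injEq]
      cases hc : p c
      · have : c ≠ a := by rintro rfl; simp [ha] at hc
        simp only [List.filter_cons, hc]
        have h := ih2 w hu hv'
        simp only [Bool.not_false, if_true, List.cons.injEq]
        constructor
        · rintro (⟨_, _, rfl, _⟩ | ⟨w', hw, rfl, rfl⟩)
          · exact absurd rfl this
          · have := h.1 hw
            exact ⟨by simpa using this.1, rfl, this.2⟩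
        · rintro ⟨h1, rfl, h2⟩
          exact Or.inr ⟨w, h.2 ⟨by simpa using h1, h2⟩, rfl, rfl⟩
      · have : c ≠ b := by rintro rfl; simp [hb] at hc
        simp only [List.filter_cons, hc]
        have h := ih1 w hu' hv
        simp only [if_true, List.cons.injEq]
        constructor
        · rintro (⟨w', hw, rfl, rfl⟩ | ⟨_, _, rfl, _⟩)
          · have := h.1 hw
            exact ⟨⟨rfl, this.1⟩, by simpa using this.2⟩
          · exact absurd rfl this
        · rintro ⟨⟨rfl, h1⟩, h2⟩
          exact Or.inl ⟨w, h.2 ⟨h1, by simpa using h2⟩, rfl, rfl⟩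

lemma perm_of_mem_shuffles {u v w : List ℕ} (h : w ∈ shuffles u v) : w.Perm (u ++ v) := by
  induction u, v using shuffles.induct generalizing w with
  | case1 v => simp_all [shuffles_nil_left]
  | case2 a u => simp_all [shuffles_nil_right]
  | case3 a u b v ih1 ih2 =>
    rw [shuffles_cons_cons, List.mem_append, List.mem_map, List.mem_map] at h
    rcases h with ⟨w, hw, rfl⟩ | ⟨w, hw, rfl⟩
    · exact (ih1 hw).cons a
    · exact ((ih2 hw).cons b).trans List.perm_middle.symm

lemma nodup_shuffles {u v : List ℕ} (h : ∀ a ∈ u, ∀ b ∈ v, a ≠ b) : (shuffles u v).Nodup := by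
  induction u, v using shuffles.induct with
  | case1 v => simp [shuffles_nil_left]
  | case2 a u => simp [shuffles_nil_right]
  | case3 a u b v ih1 ih2 =>
    rw [shuffles_cons_cons]
    refine List.Nodup.append ((ih1 ?_).map (List.cons_injective))
      ((ih2 ?_).map (List.cons_injective)) ?_
    · exact fun x hx y hy => h x (by simp [hx]) y hy
    · exact fun x hx y hy => h x hx y (by simp [hy])
    · intro w h1 h2
      rw [List.mem_map] at h1 h2
      obtain ⟨w1, _, rfl⟩ := h1
      obtain ⟨w2, _, h2⟩ := h2
      exact h a (by simp) b (by simp) (List.cons.inj h2).1.symm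

section Shuffle

variable {R : Type*} [CommRing R]

/-- The Gaussian binomial coefficient `[m + n choose m]_q`. -/
def gaussAdd (q : R) : ℕ → ℕ → R
  | 0, _ => 1
  | _ + 1, 0 => 1
  | m + 1, n + 1 => gaussAdd q m (n + 1) + q ^ (m + 1) * gaussAdd q (m + 1) n

lemma gaussAdd_zero_left (q : R) (n : ℕ) : gaussAdd q 0 n = 1 := by simp [gaussAdd]

lemma gaussAdd_zero_right (q : R) (m : ℕ) : gaussAdd q m 0 = 1 := by cases m <;> simp [gaussAdd]

lemma gaussAdd_succ_succ (q : R) (m n : ℕ) :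
    gaussAdd q (m + 1) (n + 1) = gaussAdd q m (n + 1) + q ^ (m + 1) * gaussAdd q (m + 1) n := by
  rw [gaussAdd]

lemma gaussAdd_absorb (q : R) (m n : ℕ) :
    (1 - q ^ (n + 1)) * gaussAdd q m (n + 1) = (1 - q ^ (m + n + 1)) * gaussAdd q m n ∧
      (1 - q ^ (m + 1)) * gaussAdd q (m + 1) n = (1 - q ^ (m + n + 1)) * gaussAdd q m n := by
  induction h : m + n using Nat.strong_induction_on generalizing m n with
  | _ s ih =>
    subst h
    constructor
    · cases m with
      | zero => simp [gaussAdd_zero_left]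
      | succ m =>
        have := (ih (m + n) (by omega) m n rfl).1
        have h2 := (ih (m + n) (by omega) m n rfl).2
        rw [gaussAdd_succ_succ, mul_add, this, ← h2]
        ring
    · cases n with
      | zero => simp [gaussAdd_zero_right]
      | succ n =>
        have := (ih (m + n) (by omega) m n rfl).1
        have h2 := (ih (m + n) (by omega) m n rfl).2
        rw [gaussAdd_succ_succ]
        linear_combination q ^ (m + 1) * h2 - q ^ (m + 1) * this

lemma gaussAdd_succ_succ' (q : R) (m n : ℕ) :
    gaussAdd q (m + 1) (n + 1) = q ^ (n + 1) * gaussAdd q m (n + 1) + gaussAdd q (m + 1) n := by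
  rw [gaussAdd_succ_succ]
  linear_combination (gaussAdd_absorb q m n).1 - (gaussAdd_absorb q m n).2

/-! ### Statistics on lists of positions.

A permutation `π` is encoded by the list of its positions, ordered by decreasing value. -/

/-- The label of a position: `1 ↦ 0`, `2 ↔ 3`, `4 ↔ 5`, …; it is ordered like `κ`. -/
def label (p : ℕ) : ℕ := if p % 2 = 0 then p + 1 else p - 1

/-- The major index of the reversed list of labels. -/
def majList : List ℕ → ℕ
  | [] => 0
  | [_] => 0
  | x :: y :: t => majList (y :: t) + if label x < label y then t.length + 1 else 0

/-- The number of pairs `x < y` with `x` to the left of `y`. -/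
def invList : List ℕ → ℕ
  | [] => 0
  | x :: w => invList w + w.countP (x < ·)

lemma majList_cons_cons (x y : ℕ) (t : List ℕ) :
    majList (x :: y :: t) = majList (y :: t) + if label x < label y then t.length + 1 else 0 := by
  rw [majList]

lemma sum_shuffles_cons (f : List ℕ → R) (a b : ℕ) (u v : List ℕ) :
    ((shuffles (a :: u) (b :: v)).map f).sum =
      ((shuffles u (b :: v)).map fun w => f (a :: w)).sum +
        ((shuffles (a :: u) v).map fun w => f (b :: w)).sum := by
  rw [shuffles_cons_cons, List.map_append, List.sum_append, List.map_map, List.map_map]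
  rfl

lemma sum_majList_cons_cons (q : R) (x y : ℕ) (u v : List ℕ) :
    ((shuffles u v).map fun w => q ^ majList (x :: y :: w)).sum =
      (if label x < label y then q ^ (u.length + v.length + 1) else 1) *
        ((shuffles u v).map fun w => q ^ majList (y :: w)).sum := by
  rw [← List.sum_map_mul_left]
  refine congrArg _ (List.map_congr_left fun w hw => ?_)
  have hl : w.length = u.length + v.length := by
    simpa using (perm_of_mem_shuffles hw).length_eq
  rw [majList_cons_cons, hl]
  split_ifs
  · rw [pow_add, mul_comm]
  · simp

lemma sum_majList_shuffles_head (q : R) (a b : ℕ) (u v : List ℕ)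
    (hne : ∀ x ∈ a :: u, ∀ y ∈ b :: v, label x ≠ label y) :
    ((shuffles u (b :: v)).map fun w => q ^ majList (a :: w)).sum =
        q ^ (majList (a :: u) + majList (b :: v)) *
          ((if label a < label b then q ^ (v.length + 1) else 1) *
            gaussAdd q u.length (v.length + 1)) ∧
      ((shuffles (a :: u) v).map fun w => q ^ majList (b :: w)).sum =
        q ^ (majList (a :: u) + majList (b :: v)) *
          ((if label b < label a then q ^ (u.length + 1) else 1) *
            gaussAdd q (u.length + 1) v.length) := by
  induction hs : u.length + v.length using Nat.strong_induction_on generalizing a b u v with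
  | _ s ih =>
    subst hs
    have hab := hne a (by simp) b (by simp)
    constructor
    · cases u with
      | nil =>
        simp only [shuffles_nil_left, majList_cons_cons, List.map_cons, List.map_nil,
          List.sum_singleton, List.length_nil, gaussAdd_zero_left]
        split_ifs <;> simp [majList, pow_add]
      | cons a' u =>
        have hab' := hne a' (by simp) b (by simp)
        obtain ⟨h1, h2⟩ := ih (u.length + v.length) (by simp) a' b u v
          (fun x hx y hy => hne x (List.mem_cons_of_mem _ hx) y hy) rfl
        rw [sum_shuffles_cons, sum_majList_cons_cons, sum_majList_cons_cons, h1, h2]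
        have e1 := gaussAdd_succ_succ q u.length v.length
        have e2 := gaussAdd_succ_succ' q u.length v.length
        rw [majList_cons_cons a a' u]
        simp only [List.length_cons]
        rcases lt_or_gt_of_ne hab with h3 | h3 <;> rcases lt_or_gt_of_ne hab' with h4 | h4 <;>
          by_cases h5 : label a < label a' <;>
          simp only [h3, h4, h5, if_true, if_false, not_lt_of_gt h3, not_lt_of_gt h4] <;>
          first
          | omega
          | (rw [e1]; ring1)
          | (rw [e2]; ring1)
    · cases v with
      | nil =>
        simp only [shuffles_nil_right, majList_cons_cons, List.map_cons, List.map_nil,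
          List.sum_singleton, List.length_nil, gaussAdd_zero_right]
        split_ifs <;> simp [majList, pow_add]
      | cons b' v =>
        have hab' := hne a (by simp) b' (by simp)
        obtain ⟨h1, h2⟩ := ih (u.length + v.length) (by simp) a b' u v
          (fun x hx y hy => hne x hx y (List.mem_cons_of_mem _ hy)) rfl
        rw [sum_shuffles_cons, sum_majList_cons_cons, sum_majList_cons_cons, h1, h2]
        have e1 := gaussAdd_succ_succ q u.length v.length
        have e2 := gaussAdd_succ_succ' q u.length v.length
        rw [majList_cons_cons b b' v]
        simp only [List.length_cons]
        rcases lt_or_gt_of_ne hab with h3 | h3 <;> rcases lt_or_gt_of_ne hab' with h4 | h4 <;>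
          by_cases h5 : label b < label b' <;>
          simp only [h3, h4, h5, if_true, if_false, not_lt_of_gt h3, not_lt_of_gt h4] <;>
          first
          | omega
          | (rw [e1]; ring1)
          | (rw [e2]; ring1)

lemma sum_invList_shuffles (q : R) (u v : List ℕ) (h : ∀ a ∈ u, ∀ b ∈ v, a < b) :
    ((shuffles u v).map fun w => q ^ invList w).sum =
      q ^ (invList u + invList v) * gaussAdd q u.length v.length := by
  induction u, v using shuffles.induct with
  | case1 v => simp [shuffles_nil_left, gaussAdd_zero_left, invList]
  | case2 a u => simp [shuffles_nil_right, gaussAdd_zero_right, invList]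
  | case3 a u b v ih1 ih2 =>
    have hu : ∀ x ∈ u, ∀ y ∈ b :: v, x < y := fun x hx y hy => h x (by simp [hx]) y hy
    have hv : ∀ x ∈ a :: u, ∀ y ∈ v, x < y := fun x hx y hy => h x hx y (by simp [hy])
    have h1 : ((shuffles u (b :: v)).map fun w => q ^ invList (a :: w)).sum =
        q ^ (u.countP (a < ·) + (v.length + 1)) *
          ((shuffles u (b :: v)).map fun w => q ^ invList w).sum := by
      rw [← List.sum_map_mul_left]
      refine congrArg _ (List.map_congr_left fun w hw => ?_)
      have hc : (b :: v).countP (a < ·) = (b :: v).length :=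
        List.countP_eq_length.2 fun y hy => by simpa using h a (by simp) y hy
      rw [invList, (perm_of_mem_shuffles hw).countP_eq, List.countP_append, hc, pow_add, mul_comm]
      rfl
    have h2 : ((shuffles (a :: u) v).map fun w => q ^ invList (b :: w)).sum =
        q ^ (v.countP (b < ·)) * ((shuffles (a :: u) v).map fun w => q ^ invList w).sum := by
      rw [← List.sum_map_mul_left]
      refine congrArg _ (List.map_congr_left fun w hw => ?_)
      have hc : (a :: u).countP (b < ·) = 0 :=
        List.countP_eq_zero.2 fun y hy => by simpa using (h y hy b (by simp)).le
      rw [invList, (perm_of_mem_shuffles hw).countP_eq, List.countP_append, hc, zero_add, pow_add,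
        mul_comm]
    rw [sum_shuffles_cons, h1, h2, ih1 hu, ih2 hv]
    simp only [List.length_cons]
    rw [gaussAdd_succ_succ' q u.length v.length]
    simp only [invList]
    ring

end Shuffle

/-! ### Orders of positions coming from alternating permutations. -/

/-- The list of positions comes from an alternating permutation: every odd position `p` comes
after `p + 1`, every even position `p` comes before `p + 1`. -/
def IsAltOrder (r : List ℕ) : Prop :=
  ∀ p ∈ r, p + 1 ∈ r → (p % 2 = 1 → [p + 1, p].Sublist r) ∧ (p % 2 = 0 → [p, p + 1].Sublist r)

/-- The number of even positions `p` that come after `p + 2`. -/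
def ascList (r : List ℕ) : ℕ := r.countP fun p => p % 2 = 0 ∧ [p + 2, p].Sublist r

/-- The alternating orders of the positions `lo, …, lo + L - 1`. -/
def altOrders (lo L : ℕ) : Finset (List ℕ) :=
  (List.range' lo L).permutations.toFinset.filter IsAltOrder

lemma mem_altOrders {lo L : ℕ} {r : List ℕ} :
    r ∈ altOrders lo L ↔ r.Perm (List.range' lo L) ∧ IsAltOrder r := by
  simp [altOrders]

lemma mem_of_mem_altOrders {lo L : ℕ} {r : List ℕ} (h : r ∈ altOrders lo L) (p : ℕ) :
    p ∈ r ↔ lo ≤ p ∧ p < lo + L := by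
  rw [(mem_altOrders.1 h).1.mem_iff, List.mem_range'_1]

lemma length_of_mem_altOrders {lo L : ℕ} {r : List ℕ} (h : r ∈ altOrders lo L) :
    r.length = L := by
  simpa using (mem_altOrders.1 h).1.length_eq

lemma nodup_of_mem_altOrders {lo L : ℕ} {r : List ℕ} (h : r ∈ altOrders lo L) : r.Nodup :=
  (mem_altOrders.1 h).1.nodup_iff.2 List.nodup_range'

lemma pair_sublist_cons {a b x : ℕ} {w : List ℕ} :
    [a, b].Sublist (x :: w) ↔ [a, b].Sublist w ∨ a = x ∧ b ∈ w := by
  rw [List.sublist_cons_iff]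
  refine or_congr_right ⟨?_, ?_⟩
  · rintro ⟨r, h, hr⟩
    obtain ⟨rfl, rfl⟩ := List.cons.inj h
    exact ⟨rfl, List.singleton_sublist.1 hr⟩
  · rintro ⟨rfl, hb⟩
    exact ⟨[b], rfl, List.singleton_sublist.2 hb⟩

lemma pair_sublist_filter {a b : ℕ} {p : ℕ → Bool} (ha : p a = true) (hb : p b = true)
    (w : List ℕ) : [a, b].Sublist (w.filter p) ↔ [a, b].Sublist w := by
  refine ⟨fun h => h.trans List.filter_sublist, fun h => ?_⟩
  simpa [ha, hb] using h.filter p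

lemma mem_shuffles_iff_lt {x : ℕ} {u v : List ℕ} (hu : ∀ a ∈ u, a < x) (hv : ∀ b ∈ v, x < b)
    (w : List ℕ) :
    w ∈ shuffles u v ↔ w.filter (· < x) = u ∧ w.filter (fun y => !decide (y < x)) = v :=
  mem_shuffles_iff _ u v w (by simpa using hu) (by simpa using fun b hb => (hv b hb).le)

lemma pair_sublist_shuffle_left {x : ℕ} {u v w : List ℕ} (hu : ∀ a ∈ u, a < x)
    (hv : ∀ b ∈ v, x < b) (hw : w ∈ shuffles u v) {a b : ℕ} (ha : a < x) (hb : b < x) :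
    [a, b].Sublist (x :: w) ↔ [a, b].Sublist u := by
  rw [pair_sublist_cons, ← ((mem_shuffles_iff_lt hu hv w).1 hw).1,
    pair_sublist_filter (by simpa using ha) (by simpa using hb)]
  simp [ha.ne]

lemma pair_sublist_shuffle_right {x : ℕ} {u v w : List ℕ} (hu : ∀ a ∈ u, a < x)
    (hv : ∀ b ∈ v, x < b) (hw : w ∈ shuffles u v) {a b : ℕ} (ha : x < a) (hb : x < b) :
    [a, b].Sublist (x :: w) ↔ [a, b].Sublist v := by
  rw [pair_sublist_cons, ← ((mem_shuffles_iff_lt hu hv w).1 hw).2,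
    pair_sublist_filter (by simpa using ha.le) (by simpa using hb.le)]
  simp [ha.ne']

lemma isAltOrder_cons_iff {x : ℕ} (hx : x % 2 = 0) {u v w : List ℕ} (hu : ∀ a ∈ u, a < x)
    (hv : ∀ b ∈ v, x < b) (hw : w ∈ shuffles u v) :
    IsAltOrder (x :: w) ↔ IsAltOrder u ∧ IsAltOrder v := by
  have hmem (p : ℕ) : p ∈ w ↔ p ∈ u ∨ p ∈ v := by simp [(perm_of_mem_shuffles hw).mem_iff]
  constructor
  · intro h
    constructor
    · intro p hp hp1
      have := h p (by simp [hmem, hp]) (by simp [hmem, hp1])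
      rwa [pair_sublist_shuffle_left hu hv hw (hu _ hp1) (hu _ hp),
        pair_sublist_shuffle_left hu hv hw (hu _ hp) (hu _ hp1)] at this
    · intro p hp hp1
      have := h p (by simp [hmem, hp]) (by simp [hmem, hp1])
      rwa [pair_sublist_shuffle_right hu hv hw (hv _ hp1) (hv _ hp),
        pair_sublist_shuffle_right hu hv hw (hv _ hp) (hv _ hp1)] at this
  · rintro ⟨h1, h2⟩ p hp hp1
    rw [List.mem_cons, hmem] at hp hp1
    rcases lt_trichotomy p x with h | rfl | h
    · have hpu : p ∈ u := by
        rcases hp with rfl | hp | hp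
        · omega
        · exact hp
        · have := hv _ hp; omega
      rcases hp1 with rfl | hp1 | hp1
      · refine ⟨fun _ => ?_, by omega⟩
        rw [pair_sublist_cons]
        exact Or.inr ⟨rfl, (hmem p).2 (Or.inl hpu)⟩
      · rw [pair_sublist_shuffle_left hu hv hw (hu _ hp1) (hu _ hpu),
          pair_sublist_shuffle_left hu hv hw (hu _ hpu) (hu _ hp1)]
        exact h1 p hpu hp1
      · have := hv _ hp1; omega
    · refine ⟨by omega, fun _ => ?_⟩
      rw [pair_sublist_cons]
      refine Or.inr ⟨rfl, (hmem _).2 ?_⟩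
      simpa using hp1
    · have hpv : p ∈ v := by
        rcases hp with rfl | hp | hp
        · omega
        · have := hu _ hp; omega
        · exact hp
      have hpv1 : p + 1 ∈ v := by
        rcases hp1 with rfl | hp | hp
        · omega
        · have := hu _ hp; omega
        · exact hp
      rw [pair_sublist_shuffle_right hu hv hw (hv _ hpv1) (hv _ hpv),
        pair_sublist_shuffle_right hu hv hw (hv _ hpv) (hv _ hpv1)]
      exact h2 p hpv hpv1

lemma head_even_of_mem_altOrders {lo L x : ℕ} {w : List ℕ} (hlo : lo % 2 = 1) (hL : 2 ≤ L)
    (h : x :: w ∈ altOrders lo L) : x % 2 = 0 := by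
  by_contra hx
  have hmem := mem_of_mem_altOrders h
  have hnd := List.nodup_cons.1 (nodup_of_mem_altOrders h)
  have hxm := (hmem x).1 (by simp)
  have hgood := (mem_altOrders.1 h).2
  by_cases h1 : x + 1 < lo + L
  · have := (hgood x (by simp) ((hmem _).2 (by omega))).1 (by omega)
    rw [pair_sublist_cons] at this
    rcases this with this | this
    · exact hnd.1 (this.subset (by simp))
    · omega
  · have := (hgood (x - 1) ((hmem _).2 (by omega)) ((hmem _).2 (by omega))).2 (by omega)
    rw [pair_sublist_cons, Nat.sub_add_cancel (by omega)] at this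
    rcases this with this | this
    · exact hnd.1 (this.subset (by simp))
    · omega

lemma sum_altOrders {M : Type*} [AddCommMonoid M] {lo L : ℕ} (hlo : lo % 2 = 1) (hL : 2 ≤ L)
    (f : List ℕ → M) :
    ∑ r ∈ altOrders lo L, f r =
      ∑ x ∈ (Finset.Ico lo (lo + L)).filter (· % 2 = 0),
        ∑ u ∈ altOrders lo (x - lo), ∑ v ∈ altOrders (x + 1) (lo + L - (x + 1)),
          ((shuffles u v).map fun w => f (x :: w)).sum := by
  have hbounds {x : ℕ} {u v : List ℕ} (hx : lo ≤ x) (hu : u ∈ altOrders lo (x - lo))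
      (hv : v ∈ altOrders (x + 1) (lo + L - (x + 1))) :
      (∀ a ∈ u, a < x) ∧ ∀ b ∈ v, x < b := by
    refine ⟨fun a ha => ?_, fun b hb => ?_⟩
    · have := (mem_of_mem_altOrders hu a).1 ha
      omega
    · have := (mem_of_mem_altOrders hv b).1 hb
      omega
  have hsum : ∀ x ∈ (Finset.Ico lo (lo + L)).filter (· % 2 = 0),
      ∀ u ∈ altOrders lo (x - lo), ∀ v ∈ altOrders (x + 1) (lo + L - (x + 1)),
        ((shuffles u v).map fun w => f (x :: w)).sum =
          ∑ w ∈ (shuffles u v).toFinset, f (x :: w) := by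
    intro x hx u hu v hv
    rw [Finset.mem_filter, Finset.mem_Ico] at hx
    obtain ⟨h1, h2⟩ := hbounds hx.1.1 hu hv
    rw [List.sum_toFinset]
    exact nodup_shuffles fun a ha b hb => ((h1 a ha).trans (h2 b hb)).ne
  rw [Finset.sum_congr rfl fun x hx => Finset.sum_congr rfl fun u hu =>
    Finset.sum_congr rfl fun v hv => hsum x hx u hu v hv]
  simp_rw [Finset.sum_sigma']
  refine Finset.sum_bij'
    (fun r _ => ⟨r.headD 0, r.tail.filter (· < r.headD 0),
      r.tail.filter (fun y => !decide (y < r.headD 0)), r.tail⟩)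
    (fun s _ => s.1 :: s.2.2.2) ?_ ?_ ?_ ?_ ?_
  · intro r hr
    cases r with
    | nil => have := length_of_mem_altOrders hr; simp at this; omega
    | cons x w =>
      have hx := head_even_of_mem_altOrders hlo hL hr
      have hmem := mem_of_mem_altOrders hr
      have hxm := (hmem x).1 (by simp)
      have hnd := List.nodup_cons.1 (nodup_of_mem_altOrders hr)
      simp only [List.headD_cons, List.tail_cons, Finset.mem_sigma, Finset.mem_filter,
        Finset.mem_Ico, List.mem_toFinset]
      have hu : ∀ a ∈ w.filter (· < x), a < x := by simp
      have hv : ∀ b ∈ w.filter (fun y => !decide (y < x)), x < b := by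
        intro b hb
        simp only [List.mem_filter, Bool.not_eq_true', decide_eq_false_iff_not, not_lt] at hb
        exact lt_of_le_of_ne hb.2 (by rintro rfl; exact hnd.1 hb.1)
      have hw := (mem_shuffles_iff_lt hu hv w).2 ⟨rfl, rfl⟩
      have hgood := (isAltOrder_cons_iff hx hu hv hw).1 (mem_altOrders.1 hr).2
      have hmw (a : ℕ) (ha : a ≠ x) : a ∈ w ↔ lo ≤ a ∧ a < lo + L := by
        rw [← hmem a]; simp [ha]
      have hpu : (w.filter (· < x)).Perm (List.range' lo (x - lo)) := by
        refine (List.perm_ext_iff_of_nodup (hnd.2.filter _) List.nodup_range').2 fun a => ?_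
        rw [List.mem_filter, List.mem_range'_1, decide_eq_true_iff]
        constructor
        · rintro ⟨h1, h2⟩
          rw [hmw a h2.ne] at h1
          omega
        · intro h
          rw [hmw a (by omega)]
          omega
      have hpv : (w.filter (fun y => !decide (y < x))).Perm
          (List.range' (x + 1) (lo + L - (x + 1))) := by
        refine (List.perm_ext_iff_of_nodup (hnd.2.filter _) List.nodup_range').2 fun a => ?_
        rw [List.mem_range'_1]
        constructor
        · intro h
          have h2 := hv a h
          have h1 := (List.mem_filter.1 h).1
          rw [hmw a h2.ne'] at h1
          omega
        · intro h
          rw [List.mem_filter, hmw a (by omega), Bool.not_eq_true', decide_eq_false_iff_not]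
          omega
      exact ⟨⟨hxm, hx⟩, mem_altOrders.2 ⟨hpu, hgood.1⟩, mem_altOrders.2 ⟨hpv, hgood.2⟩, hw⟩
  · rintro ⟨x, u, v, w⟩ h
    simp only [Finset.mem_sigma, Finset.mem_filter, Finset.mem_Ico, List.mem_toFinset] at h
    obtain ⟨⟨hxm, hx⟩, hu, hv, hw⟩ := h
    obtain ⟨h1, h2⟩ := hbounds hxm.1 hu hv
    refine mem_altOrders.2 ⟨?_, (isAltOrder_cons_iff hx h1 h2 hw).2
      ⟨(mem_altOrders.1 hu).2, (mem_altOrders.1 hv).2⟩⟩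
    have hp := perm_of_mem_shuffles hw
    refine ((hp.cons x).trans List.perm_middle.symm).trans ?_
    refine ((mem_altOrders.1 hu).1.append ((mem_altOrders.1 hv).1.cons x)).trans ?_
    rw [← List.range'_succ]
    have e : x = lo + (x - lo) := by omega
    conv_lhs => rw [e]
    rw [Nat.add_sub_cancel_left, List.range'_append_1]
    rw [show x - lo + (lo + L - (lo + (x - lo) + 1) + 1) = L by omega]
  · intro r hr
    cases r with
    | nil => have := length_of_mem_altOrders hr; simp at this; omega
    | cons x w => rfl
  · rintro ⟨x, u, v, w⟩ h
    simp only [Finset.mem_sigma, Finset.mem_filter, Finset.mem_Ico, List.mem_toFinset] at h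
    obtain ⟨⟨hxm, hx⟩, hu, hv, hw⟩ := h
    obtain ⟨h1, h2⟩ := hbounds hxm.1 hu hv
    obtain ⟨h3, h4⟩ := (mem_shuffles_iff_lt h1 h2 w).1 hw
    simp [h3, ← h4]
  · intro r hr
    cases r with
    | nil => have := length_of_mem_altOrders hr; simp at this; omega
    | cons x w => rfl

lemma countP_eq_countP_add_count {P Q : ℕ → Bool} {c : ℕ} {l : List ℕ} (hc : Q c = false)
    (h : ∀ p ∈ l, P p = (Q p || p == c)) : l.countP P = l.countP Q + l.count c := by
  induction l with
  | nil => simp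
  | cons a l ih =>
    rw [List.countP_cons, List.countP_cons, List.count_cons, h a (by simp),
      ih fun p hp => h p (by simp [hp])]
    by_cases hac : a = c
    · subst hac; simp [hc]; omega
    · simp [hac]; omega

lemma ascList_cons {lo x k : ℕ} (hlo : lo % 2 = 1) (hx : x % 2 = 0) (hlx : lo ≤ x)
    {u v w : List ℕ} (hu : u ∈ altOrders lo (x - lo)) (hv : v ∈ altOrders (x + 1) k)
    (hw : w ∈ shuffles u v) :
    ascList (x :: w) = ascList u + ascList v + if 2 ≤ x - lo then 1 else 0 := by
  have hmu := mem_of_mem_altOrders hu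
  have hmv := mem_of_mem_altOrders hv
  have hu' : ∀ a ∈ u, a < x := fun a ha => by have := (hmu a).1 ha; omega
  have hv' : ∀ b ∈ v, x < b := fun b hb => by have := (hmv b).1 hb; omega
  have hp := perm_of_mem_shuffles hw
  have hxw : x ∉ w := fun h => by
    rw [hp.mem_iff, List.mem_append] at h
    rcases h with h | h
    · exact lt_irrefl _ (hu' _ h)
    · exact lt_irrefl _ (hv' _ h)
  have hcv : v.countP (fun p => p % 2 = 0 ∧ [p + 2, p].Sublist (x :: w)) = ascList v := by
    refine List.countP_congr fun p hpv => ?_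
    have := hv' p hpv
    rw [decide_eq_true_iff, decide_eq_true_iff,
      pair_sublist_shuffle_right hu' hv' hw (by omega) (by omega)]
  have hcu : u.countP (fun p => p % 2 = 0 ∧ [p + 2, p].Sublist (x :: w)) =
      ascList u + u.count (x - 2) := by
    refine countP_eq_countP_add_count ?_ fun p hpu => ?_
    · simp only [decide_eq_false_iff_not, not_and]
      intro _ h
      have := hu' _ (h.subset (List.mem_cons_self ..))
      omega
    · have h1 := hu' p hpu
      have h2 := (hmu p).1 hpu
      by_cases h3 : p + 2 = x
      · have : p = x - 2 := by omega
        subst this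
        have : [x - 2 + 2, x - 2].Sublist (x :: w) :=
          pair_sublist_cons.2 (Or.inr ⟨h3, hp.mem_iff.2 (by simp [hpu])⟩)
        simp only [this, beq_self_eq_true, Bool.or_true, and_true, decide_eq_true_eq]
        omega
      · by_cases h4 : p % 2 = 0
        · have : (p == x - 2) = false := by simp; omega
          rw [this, Bool.or_false, decide_eq_decide,
            pair_sublist_shuffle_left hu' hv' hw (by omega) h1]
        · have : (p == x - 2) = false := by simp; omega
          simp [h4, this]
  have hcount : u.count (x - 2) = if 2 ≤ x - lo then 1 else 0 := by
    split_ifs with h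
    · exact List.count_eq_one_of_mem (nodup_of_mem_altOrders hu) ((hmu _).2 (by omega))
    · refine List.count_eq_zero_of_not_mem fun h' => ?_
      have := (hmu _).1 h'
      omega
  have hhead : ¬ [x + 2, x].Sublist (x :: w) := by
    rw [pair_sublist_cons]
    rintro (h | h)
    · exact hxw (h.subset (by simp))
    · omega
  rw [ascList, List.countP_cons_of_neg (by simp [hhead]), hp.countP_eq, List.countP_append, hcu,
    hcv, hcount]
  omega

lemma invList_cons {x : ℕ} {u v w : List ℕ} (hu : ∀ a ∈ u, a < x) (hv : ∀ b ∈ v, x < b)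
    (hw : w ∈ shuffles u v) : invList (x :: w) = invList w + v.length := by
  rw [invList, (perm_of_mem_shuffles hw).countP_eq, List.countP_append,
    List.countP_eq_zero.2 fun a ha => by simpa using (hu a ha).le,
    List.countP_eq_length.2 fun b hb => by simpa using hv b hb, zero_add]

lemma sum_majList_cons_shuffles {R : Type*} [CommRing R] (q : R) {lo x k : ℕ} (hlo : lo % 2 = 1)
    (hx : x % 2 = 0) (hlx : lo ≤ x) {u v : List ℕ} (hu : u ∈ altOrders lo (x - lo))
    (hv : v ∈ altOrders (x + 1) k) :
    ((shuffles u v).map fun w => q ^ majList (x :: w)).sum =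
      q ^ (majList u + majList v + if k = 1 then 0 else k) * gaussAdd q (x - lo) k := by
  have hmu := mem_of_mem_altOrders hu
  have hmv := mem_of_mem_altOrders hv
  have hlu := length_of_mem_altOrders hu
  have hlv := length_of_mem_altOrders hv
  cases u with
  | nil => simp at hlu; omega
  | cons a u =>
    have ha := (hmu a).1 (by simp)
    have hxa : ¬ label x < label a := by simp only [label]; split_ifs <;> omega
    cases v with
    | nil =>
      simp only [List.length_nil] at hlv
      simp [shuffles_nil_right, ← hlv, gaussAdd_zero_right, majList, hxa]
    | cons b v =>
      have hb := (hmv b).1 (by simp)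
      have hab : label a < label b := by simp only [label]; split_ifs <;> omega
      have hne : ∀ y ∈ a :: u, ∀ z ∈ b :: v, label y ≠ label z := by
        intro y hy z hz
        have h1 := (hmu y).1 hy
        have h2 := (hmv z).1 hz
        simp only [label]
        split_ifs <;> omega
      obtain ⟨h1, h2⟩ := sum_majList_shuffles_head q a b u v hne
      rw [sum_shuffles_cons, sum_majList_cons_cons, sum_majList_cons_cons, h1, h2]
      simp only [hxa, hab, not_lt_of_gt hab, if_true, if_false]
      rw [List.length_cons] at hlu hlv ⊢
      rw [← hlu, ← hlv]
      by_cases hk : v.length = 0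
      · have hxb : ¬ label x < label b := by
          have : b = x + 1 := by omega
          simp only [label]
          split_ifs <;> omega
        rw [hk, gaussAdd_succ_succ' q u.length 0]
        simp only [hxb, if_true, if_false]
        ring
      · have hbe : b % 2 = 0 := head_even_of_mem_altOrders (by omega) (by omega) hv
        have hxb : label x < label b := by
          rw [label, label, if_pos hx, if_pos hbe]
          omega
        rw [gaussAdd_succ_succ q u.length v.length]
        simp only [hxb, if_true, if_neg (show ¬ v.length + 1 = 1 by omega)]
        ring

open LaurentPolynomial in
lemma sum_invList_cons_shuffles {lo x k : ℕ} (hlo : lo % 2 = 1) (hx : x % 2 = 0) (hlx : lo ≤ x)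
    {u v : List ℕ} (hu : u ∈ altOrders lo (x - lo)) (hv : v ∈ altOrders (x + 1) k) :
    ((shuffles u v).map fun w =>
        (T ((invList (x :: w) : ℤ) - ascList (x :: w)) : LaurentPolynomial ℤ)).sum =
      T ((invList u : ℤ) - ascList u) * T ((invList v : ℤ) - ascList v) *
        (T ((k : ℤ) - if 2 ≤ x - lo then 1 else 0) * gaussAdd (T 1) (x - lo) k) := by
  have hu' : ∀ a ∈ u, a < x := fun a ha => by
    have := (mem_of_mem_altOrders hu a).1 ha; omega
  have hv' : ∀ b ∈ v, x < b := fun b hb => by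
    have := (mem_of_mem_altOrders hv b).1 hb; omega
  have hterm : (shuffles u v).map (fun w =>
        (T ((invList (x :: w) : ℤ) - ascList (x :: w)) : LaurentPolynomial ℤ)) =
      (shuffles u v).map fun w =>
        T ((k : ℤ) - ascList u - ascList v - if 2 ≤ x - lo then 1 else 0) * T 1 ^ invList w := by
    refine List.map_congr_left fun w hw => ?_
    rw [invList_cons hu' hv' hw, ascList_cons hlo hx hlx hu hv hw, length_of_mem_altOrders hv,
      T_pow, ← T_add]
    congr 1
    push_cast
    ring
  rw [hterm, List.sum_map_mul_left,
    sum_invList_shuffles _ _ _ fun a ha b hb => (hu' a ha).trans (hv' b hb),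
    length_of_mem_altOrders hu, length_of_mem_altOrders hv, T_pow, ← mul_assoc, ← mul_assoc,
    ← T_add, ← T_add, ← T_add]
  congr 2
  push_cast
  ring

open LaurentPolynomial in
lemma sum_invList_sub_ascList (L lo : ℕ) (hlo : lo % 2 = 1) :
    ∑ r ∈ altOrders lo L, (T ((invList r : ℤ) - ascList r) : LaurentPolynomial ℤ) =
      T (if L % 2 = 1 ∧ 3 ≤ L then 1 else 0) * ∑ r ∈ altOrders lo L, T 1 ^ majList r := by
  induction L using Nat.strong_induction_on generalizing lo with
  | _ L ih =>
    rcases Nat.lt_or_ge L 2 with hL | hL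
    · rw [if_neg (by omega), T_zero, one_mul]
      refine Finset.sum_congr rfl fun r hr => ?_
      have hl := length_of_mem_altOrders hr
      match r, hl with
      | [], _ => simp [invList, ascList, majList]
      | [p], _ =>
        simp [invList, ascList, majList]
      | _ :: _ :: _, hl => simp at hl; omega
    · rw [sum_altOrders hlo hL, sum_altOrders hlo hL, Finset.mul_sum]
      refine Finset.sum_congr rfl fun x hx => ?_
      rw [Finset.mem_filter, Finset.mem_Ico] at hx
      obtain ⟨⟨hlx, hxL⟩, hx⟩ := hx
      set k := lo + L - (x + 1) with hk
      have h1 := ih (x - lo) (by omega) lo hlo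
      have h2 := ih k (by omega) (x + 1) (by omega)
      rw [Finset.sum_congr rfl fun u hu => Finset.sum_congr rfl fun v hv =>
          sum_invList_cons_shuffles hlo hx hlx hu hv,
        Finset.sum_congr rfl fun u hu => Finset.sum_congr rfl fun v hv =>
          sum_majList_cons_shuffles (T 1 : LaurentPolynomial ℤ) hlo hx hlx hu hv]
      simp_rw [pow_add, mul_assoc _ _ (gaussAdd _ _ _), ← Finset.sum_mul]
      rw [← Finset.sum_mul_sum, ← Finset.sum_mul_sum, h1, h2, T_pow]
      have e : (T (if (x - lo) % 2 = 1 ∧ 3 ≤ x - lo then 1 else 0) : LaurentPolynomial ℤ) *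
            T (if k % 2 = 1 ∧ 3 ≤ k then 1 else 0) * T ((k : ℤ) - if 2 ≤ x - lo then 1 else 0) =
          T (if L % 2 = 1 ∧ 3 ≤ L then 1 else 0) * T (((if k = 1 then 0 else k : ℕ) : ℤ) * 1) := by
        rw [← T_add, ← T_add, ← T_add]
        congr 1
        split_ifs <;> push_cast <;> omega
      linear_combination (∑ u ∈ altOrders lo (x - lo), T 1 ^ majList u) *
        (∑ v ∈ altOrders (x + 1) k, T 1 ^ majList v) * gaussAdd (T 1) (x - lo) k * e

/-! ### From permutations to orders of positions. -/

/-- The positions of `π` listed by decreasing value. -/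
def orderList {N : ℕ} (π : Equiv.Perm (Fin N)) : List ℕ :=
  List.ofFn fun k : Fin N => (π.symm k.rev : ℕ) + 1

lemma word_succ {N : ℕ} (π : Equiv.Perm (Fin N)) (i : Fin N) :
    word π ((i : ℕ) + 1) = (π i : ℕ) + 1 := by
  have := i.isLt
  rw [word, dif_pos ⟨by omega, by omega⟩]
  congr 1

lemma pairwise_orderList {N : ℕ} (π : Equiv.Perm (Fin N)) :
    (orderList π).Pairwise fun p q => word π q < word π p := by
  rw [orderList, List.pairwise_ofFn]
  intro i j hij
  have := Fin.lt_def.1 (Fin.rev_lt_rev.2 hij)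
  rw [word_succ, word_succ, Equiv.apply_symm_apply, Equiv.apply_symm_apply]
  omega

lemma nodup_orderList {N : ℕ} (π : Equiv.Perm (Fin N)) : (orderList π).Nodup :=
  (pairwise_orderList π).imp fun h => by rintro rfl; exact lt_irrefl _ h

lemma mem_orderList {N : ℕ} {π : Equiv.Perm (Fin N)} {p : ℕ} :
    p ∈ orderList π ↔ 1 ≤ p ∧ p ≤ N := by
  rw [orderList, List.mem_ofFn]
  constructor
  · rintro ⟨k, rfl⟩
    have := (π.symm k.rev).isLt
    omega
  · intro h
    refine ⟨(π ⟨p - 1, by omega⟩).rev, ?_⟩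
    simp only [Fin.rev_rev, Equiv.symm_apply_apply]
    omega

lemma perm_orderList {N : ℕ} (π : Equiv.Perm (Fin N)) :
    (orderList π).Perm (List.range' 1 N) := by
  refine (List.perm_ext_iff_of_nodup (nodup_orderList π) List.nodup_range').2 fun a => ?_
  rw [mem_orderList, List.mem_range'_1]
  omega

lemma pair_sublist_iff_of_pairwise {f : ℕ → ℕ} {r : List ℕ}
    (hr : r.Pairwise fun p q => f q < f p) {p q : ℕ} (hp : p ∈ r) (hq : q ∈ r) :
    [p, q].Sublist r ↔ f q < f p := by
  refine ⟨fun h => by simpa using hr.sublist h, fun h => ?_⟩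
  induction r with
  | nil => simp at hp
  | cons x r ih =>
    rw [List.pairwise_cons] at hr
    rw [pair_sublist_cons]
    rcases List.mem_cons.1 hq with rfl | hqr
    · rcases List.mem_cons.1 hp with rfl | hpr
      · exact absurd h (lt_irrefl _)
      · exact absurd h (hr.1 _ hpr).not_gt
    · rcases List.mem_cons.1 hp with rfl | hpr
      · exact Or.inr ⟨rfl, hqr⟩
      · exact Or.inl (ih hr.2 hpr hqr)

lemma pair_sublist_orderList {N : ℕ} (π : Equiv.Perm (Fin N)) {p q : ℕ} (hp : 1 ≤ p ∧ p ≤ N)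
    (hq : 1 ≤ q ∧ q ≤ N) : [p, q].Sublist (orderList π) ↔ word π q < word π p :=
  pair_sublist_iff_of_pairwise (pairwise_orderList π) (mem_orderList.2 hp) (mem_orderList.2 hq)

lemma mem_altPerms_iff {N : ℕ} (π : Equiv.Perm (Fin N)) :
    π ∈ altPerms N ↔ orderList π ∈ altOrders 1 N := by
  rw [mem_altOrders, and_iff_right (perm_orderList π), altPerms, Finset.mem_filter,
    and_iff_right (Finset.mem_univ π)]
  constructor
  · intro h p hp hp1
    rw [mem_orderList] at hp hp1
    rw [pair_sublist_orderList π hp1 hp, pair_sublist_orderList π hp hp1]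
    exact h p (Finset.mem_Icc.2 (by omega))
  · intro h p hp
    rw [Finset.mem_Icc] at hp
    have := h p (mem_orderList.2 (by omega)) (mem_orderList.2 (by omega))
    rwa [pair_sublist_orderList π (by omega) (by omega),
      pair_sublist_orderList π (by omega) (by omega)] at this

lemma orderList_injective {N : ℕ} :
    Function.Injective (orderList : Equiv.Perm (Fin N) → List ℕ) := by
  intro π ρ h
  have h := List.ofFn_injective h
  rw [← Equiv.symm_bijective.injective.eq_iff]
  ext k
  simpa using congrFun h k.rev

lemma exists_orderList_eq {N : ℕ} {r : List ℕ} (hr : r.Perm (List.range' 1 N)) :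
    ∃ π : Equiv.Perm (Fin N), orderList π = r := by
  have hl : r.length = N := by simpa using hr.length_eq
  have hmem (p : ℕ) : p ∈ r ↔ 1 ≤ p ∧ p < 1 + N := by rw [hr.mem_iff, List.mem_range'_1]
  have hnd : r.Nodup := hr.nodup_iff.2 List.nodup_range'
  subst hl
  have hget (k : Fin r.length) := (hmem (r.get k)).1 (List.get_mem r k)
  let f (k : Fin r.length) : Fin r.length :=
    ⟨r.get k.rev - 1, by have := hget k.rev; omega⟩
  have hf : Function.Injective f := by
    intro i j hij
    have h1 := hget i.rev
    have h2 := hget j.rev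
    have h3 : r.get i.rev - 1 = r.get j.rev - 1 := congrArg Fin.val hij
    exact Fin.rev_injective (List.nodup_iff_injective_get.1 hnd (by omega))
  refine ⟨(Equiv.ofBijective f (Finite.injective_iff_bijective.1 hf)).symm, ?_⟩
  conv_rhs => rw [← List.ofFn_get r]
  rw [orderList]
  congr 1
  funext k
  have := hget k
  simp only [Equiv.symm_symm, Equiv.ofBijective_apply, f, Fin.rev_rev]
  omega

lemma sum_altPerms {M : Type*} [AddCommMonoid M] (N : ℕ) (f : List ℕ → M) :
    ∑ π ∈ altPerms N, f (orderList π) = ∑ r ∈ altOrders 1 N, f r := by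
  refine Finset.sum_nbij orderList (fun π hπ => (mem_altPerms_iff π).1 hπ)
    orderList_injective.injOn (fun r hr => ?_) fun _ _ => rfl
  obtain ⟨π, rfl⟩ := exists_orderList_eq (mem_altOrders.1 hr).1
  exact ⟨π, (mem_altPerms_iff π).2 hr, rfl⟩

lemma majW_length_eq_majList (r : List ℕ) :
    majW r.length (fun i => label (r.getD (r.length - i) 0)) = majList r := by
  induction r with
  | nil => rfl
  | cons x w ih =>
    cases w with
    | nil => rfl
    | cons y t =>
      rw [majList, ← ih, majW, majW, List.length_cons, List.length_cons,
        Nat.add_sub_cancel, Nat.add_sub_cancel, Finset.sum_Icc_succ_top (by omega)]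
      congr 1
      · refine Finset.sum_congr rfl fun i hi => ?_
        rw [Finset.mem_Icc] at hi
        rw [show t.length + 1 + 1 - i = (t.length + 1 - i) + 1 by omega,
          show t.length + 1 + 1 - (i + 1) = (t.length + 1 - (i + 1)) + 1 by omega,
          List.getD_cons_succ, List.getD_cons_succ]
      · simp

lemma kappaNat_lt_kappaNat_iff {N j k : ℕ} (hN : N % 2 = 0) (hj : 1 ≤ j ∧ j ≤ N)
    (hk : 1 ≤ k ∧ k ≤ N) : kappaNat N j < kappaNat N k ↔ label j < label k := by
  simp only [kappaNat, label]
  split_ifs <;> omega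

lemma getD_orderList {N : ℕ} (π : Equiv.Perm (Fin N)) {i : ℕ} (hi : 1 ≤ i ∧ i ≤ N) :
    (orderList π).getD (N - i) 0 = word π.symm i := by
  have hlt : N - i < (orderList π).length := by simp [orderList]; omega
  rw [List.getD_eq_getElem _ _ hlt, word, dif_pos hi]
  simp only [orderList, List.getElem_ofFn]
  congr 3
  ext
  simp only [Fin.val_rev]
  omega

lemma majKappaInv_eq_majList {N : ℕ} (hN : N % 2 = 0) (π : Equiv.Perm (Fin N)) :
    majKappaInv N π = majList (orderList π) := by
  have hl : (orderList π).length = N := by simp [orderList]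
  have hw {i : ℕ} (hi : 1 ≤ i ∧ i ≤ N) : 1 ≤ word π.symm i ∧ word π.symm i ≤ N := by
    rw [word, dif_pos hi]
    omega
  rw [← majW_length_eq_majList, hl, majKappaInv, majW, majW]
  refine Finset.sum_congr rfl fun i hi => ?_
  rw [Finset.mem_Icc] at hi
  rw [getD_orderList π (by omega), getD_orderList π (by omega)]
  exact if_congr (kappaNat_lt_kappaNat_iff hN (hw (by omega)) (hw (by omega))) rfl rfl

lemma invList_eq_card {f : ℕ → ℕ} {r : List ℕ} (hr : r.Pairwise fun p q => f q < f p) :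
    invList r = ((r.toFinset ×ˢ r.toFinset).filter fun p => p.1 < p.2 ∧ f p.2 < f p.1).card := by
  induction r with
  | nil => rfl
  | cons x w ih =>
    rw [List.pairwise_cons] at hr
    have hx : x ∉ w := fun h => lt_irrefl _ (hr.1 x h)
    have hnd : w.Nodup := hr.2.imp fun h => by rintro rfl; exact lt_irrefl _ h
    have hsplit : ((x :: w).toFinset ×ˢ (x :: w).toFinset).filter
          (fun p => p.1 < p.2 ∧ f p.2 < f p.1) =
        ((w.toFinset ×ˢ w.toFinset).filter fun p => p.1 < p.2 ∧ f p.2 < f p.1) ∪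
          ({x} ×ˢ (w.filter (x < ·)).toFinset) := by
      ext ⟨p, q⟩
      simp only [Finset.mem_filter, Finset.mem_product, Finset.mem_union, List.mem_toFinset,
        List.mem_cons, Finset.mem_singleton, List.mem_filter, decide_eq_true_iff]
      constructor
      · rintro ⟨⟨rfl | hp, rfl | hq⟩, h1, h2⟩
        · exact absurd h1 (lt_irrefl _)
        · exact Or.inr ⟨rfl, hq, h1⟩
        · exact absurd h2 (hr.1 _ hp).not_gt
        · exact Or.inl ⟨⟨hp, hq⟩, h1, h2⟩
      · rintro (⟨⟨hp, hq⟩, h⟩ | ⟨rfl, hq, h⟩)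
        · exact ⟨⟨Or.inr hp, Or.inr hq⟩, h⟩
        · exact ⟨⟨Or.inl rfl, Or.inr hq⟩, h, hr.1 _ hq⟩
    have hdisj : Disjoint ((w.toFinset ×ˢ w.toFinset).filter fun p => p.1 < p.2 ∧ f p.2 < f p.1)
        ({x} ×ˢ (w.filter (x < ·)).toFinset) := by
      refine Finset.disjoint_left.2 ?_
      rintro ⟨p, q⟩ h1 h2
      simp only [Finset.mem_filter, Finset.mem_product, List.mem_toFinset,
        Finset.mem_singleton] at h1 h2
      exact hx (h2.1 ▸ h1.1.1)
    rw [hsplit, Finset.card_union_of_disjoint hdisj, invList, ih hr.2, Finset.card_product,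
      Finset.card_singleton, one_mul, List.toFinset_card_of_nodup (hnd.filter _),
      List.countP_eq_length_filter]

lemma invW_eq_invList {N : ℕ} (π : Equiv.Perm (Fin N)) :
    invW N (word π) = invList (orderList π) := by
  have : (orderList π).toFinset = Finset.Icc 1 N := by
    ext p
    rw [List.mem_toFinset, mem_orderList, Finset.mem_Icc]
  rw [invList_eq_card (pairwise_orderList π), invW, this]

lemma ascW_evenWord_eq_ascList {n : ℕ} (π : Equiv.Perm (Fin (2 * n))) :
    ascW n (evenWord π) = ascList (orderList π) := by
  rw [ascList, List.countP_eq_length_filter,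
    ← List.toFinset_card_of_nodup ((nodup_orderList π).filter _), ascW]
  refine Finset.card_nbij (2 * ·) ?_ (fun i _ j _ h => by simpa using h) ?_
  · intro j hj
    rw [Finset.mem_coe, Finset.mem_filter, Finset.mem_Icc] at hj
    beta_reduce
    rw [Finset.mem_coe, List.mem_toFinset, List.mem_filter, mem_orderList, decide_eq_true_iff,
      pair_sublist_orderList π (by omega) (by omega)]
    exact ⟨by omega, by omega, hj.2⟩
  · intro p hp
    rw [Finset.mem_coe, List.mem_toFinset, List.mem_filter, decide_eq_true_iff] at hp
    obtain ⟨h1, h2, h3⟩ := hp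
    have h4 := mem_orderList.1 (h3.subset (List.mem_cons_self ..))
    rw [pair_sublist_orderList π h4 (mem_orderList.1 h1)] at h3
    rw [mem_orderList] at h1
    refine ⟨p / 2, ?_, by simp only; omega⟩
    rw [Finset.mem_coe, Finset.mem_filter, Finset.mem_Icc, evenWord, evenWord,
      show 2 * (p / 2 + 1) = p + 2 by omega, show 2 * (p / 2) = p by omega]
    exact ⟨by omega, h3⟩

theorem statement_7 (n : ℕ) (hn : 0 < n) :
    (∑ π ∈ altPerms (2 * n),
        (LaurentPolynomial.T (majKappaInv (2 * n) π : ℤ) : LaurentPolynomial ℤ)) =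
      ∑ π ∈ altPerms (2 * n),
        (LaurentPolynomial.T
          ((invW (2 * n) (word π) : ℤ) - (ascW n (evenWord π) : ℤ)) :
            LaurentPolynomial ℤ) := by
  simp_rw [majKappaInv_eq_majList (Nat.mul_mod_right 2 n), invW_eq_invList,
    ascW_evenWord_eq_ascList]
  rw [sum_altPerms (2 * n) fun r => (LaurentPolynomial.T (majList r : ℤ) : LaurentPolynomial ℤ),
    sum_altPerms (2 * n) fun r =>
      (LaurentPolynomial.T ((invList r : ℤ) - ascList r) : LaurentPolynomial ℤ),
    sum_invList_sub_ascList _ _ rfl, if_neg (by omega), LaurentPolynomial.T_zero, one_mul]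
  simp_rw [LaurentPolynomial.T_pow, mul_one]

end Paper
end
end
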